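/- arXiv:1510.02362 — 4 statements merged into one kernel-verified Lean document; each statement's English description precedes it below -/
import Mathlib

section
/- Let S be a minimal interval exchange transformation (without flips) on [0,1) exchanging n − 1 intervals I_α with permutation data (π₀, π₁), and let α₀ be the letter with π₁(α₀) = 1, so that I_{α₀} = [β_{i₀−1}, β_{i₀}) with β_{i₀} − β_{i₀−1} = λ_{α₀} and S(x) = x − β_{i₀−1} on int(I_{α₀}). Define T on [0, 1 + λ_{α₀}) by: T(x) = S(x) for x ∈ int(I_α) with α ≠ α₀; T(x) = 1 − x + β_{i₀} for x ∈ int(I_{α₀}); and T(x) = 1 − x + β_{i₀} − β_{i₀−1} for x ∈ (1, 1 + λ_{α₀}). Then: (i) T is (after rescaling the interval [0, 1 + λ_{α₀}) to unit length) an interval exchange transformation with flips on n intervals with nonempty flip set; (ii) the first return map of T to [0,1) coincides with S on the interiors of the intervals I_α; and (iii) every forward orbit of T that is defined for all positive times is dense in [0, 1 + λ_{α₀}), and every backward orbit of T defined for all negative times is dense in [0, 1 + λ_{α₀}), i.e. T is minimal. -/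
/-!
On `I_{α₀}` the map `T` is a reflection onto `(1, 1 + λ_{α₀})`, which `T` then reflects onto
`(0, λ_{α₀})`; the two reflections compose to the translation `S` on `I_{α₀}` (`two_steps`).
This gives the first return map. The images of the pieces of `T` are the images `S(I_α)` together
with `(1, 1 + λ_{α₀})`, which are pairwise disjoint, so `T` is an exchange with flips
(`exists_pieces`, `isFIETon_rescaled`).

For minimality, an orbit of `T` contains an orbit of `S` and is dense in the added interval as soon
as it is dense in `I_{α₀}` (`dense_of_hits`), so everything reduces to `S`. For forward orbits the
minimality of `S` is the hypothesis. Backward orbits need more: `S` enters any given open interval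
within a time bounded independently of the starting point (`uniform_hit`), so a backward orbit, read
forward from a sufficiently remote point, must enter that interval. The uniform bound is a
compactness argument on `[0,1]`, in which the left limits of `S` at its discontinuities require
separate care.
-/

open MeasureTheory Set
open scoped ENNReal

namespace IETcore

variable {m : ℕ}

/-- Left endpoint of the interval `I_α` of an IET with length data `lam` and
combinatorial data `p0` (positions in the source, `0`-indexed). -/
noncomputable def ietLeft (lam : Fin m → ℝ) (p0 : Equiv.Perm (Fin m)) (α : Fin m) : ℝ :=
  ∑ β ∈ Finset.univ.filter (fun β => p0 β < p0 α), lam β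

/-- Translation constant of an IET on the interval `I_α`. -/
noncomputable def ietW (lam : Fin m → ℝ) (p0 p1 : Equiv.Perm (Fin m)) (α : Fin m) : ℝ :=
  (∑ β ∈ Finset.univ.filter (fun β => p1 β < p1 α), lam β) - ietLeft lam p0 α

/-- `S` is the interval exchange transformation of `[0,1)` with data `(lam, p0, p1)`. -/
def IsIET (lam : Fin m → ℝ) (p0 p1 : Equiv.Perm (Fin m)) (S : ℝ → ℝ) : Prop :=
  (∀ α, 0 < lam α) ∧ (∑ α, lam α = 1) ∧
  ∀ α, ∀ x ∈ Ico (ietLeft lam p0 α) (ietLeft lam p0 α + lam α),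
    S x = x + ietW lam p0 p1 α

/-- Minimality of a map of `[0,1)`: every (forward) orbit is dense. -/
def IsMinimalOn (S : ℝ → ℝ) (I : Set ℝ) : Prop :=
  ∀ x ∈ I, I ⊆ closure (range fun k : ℕ => S^[k] x)

end IETcore

namespace IETcore

/-- `f` is an interval exchange transformation with flips of `[0,1)` on `N` intervals
(with nonempty flip set): a piecewise isometry defined on the interiors of `N`
consecutive subintervals, acting as a translation on the non-flipped intervals and as
an orientation-reversing isometry on the flipped ones, whose images of the interiors
are pairwise disjoint subsets of `[0,1)`. -/
def IsFIETon (N : ℕ) (f : ℝ → ℝ) : Prop :=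
  ∃ c : ℕ → ℝ, c 0 = 0 ∧ c N = 1 ∧ (∀ i < N, c i < c (i + 1)) ∧
  ∃ fl : ℕ → Bool, (∃ i < N, fl i = true) ∧
  ∃ w : ℕ → ℝ,
    (∀ i < N, ∀ x ∈ Ioo (c i) (c (i + 1)),
      f x = if fl i then w i - x else x + w i) ∧
    (∀ i < N,
      (fun x => if fl i then w i - x else x + w i) '' Ioo (c i) (c (i + 1))
        ⊆ Ico 0 1) ∧
    (∀ i < N, ∀ j < N, i ≠ j →
      Disjoint
        ((fun x => if fl i then w i - x else x + w i) '' Ioo (c i) (c (i + 1)))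
        ((fun x => if fl j then w j - x else x + w j) '' Ioo (c j) (c (j + 1))))


/-! ### Partial sums of the lengths -/

/-- Sum of the lengths of the first `i` intervals in the order prescribed by `p`. -/
noncomputable def cum {m : ℕ} (lam : Fin m → ℝ) (p : Equiv.Perm (Fin m)) (i : ℕ) : ℝ :=
  ∑ β ∈ Finset.univ.filter (fun β => (p β : ℕ) < i), lam β

lemma ietLeft_eq_cum {m : ℕ} (lam : Fin m → ℝ) (p : Equiv.Perm (Fin m)) (α : Fin m) :
    ietLeft lam p α = cum lam p (p α) := rfl

lemma cum_zero {m : ℕ} (lam : Fin m → ℝ) (p : Equiv.Perm (Fin m)) : cum lam p 0 = 0 := by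
  simp [cum]

lemma cum_top {m : ℕ} (lam : Fin m → ℝ) (p : Equiv.Perm (Fin m)) :
    cum lam p m = ∑ α, lam α := by
  simp [cum]

lemma cum_succ {m : ℕ} (lam : Fin m → ℝ) (p : Equiv.Perm (Fin m)) (α : Fin m) :
    cum lam p (p α + 1) = cum lam p (p α) + lam α := by
  have h : Finset.univ.filter (fun β => (p β : ℕ) < p α + 1)
      = insert α (Finset.univ.filter (fun β => (p β : ℕ) < p α)) := by
    ext β
    simp only [Finset.mem_filter, Finset.mem_univ, true_and, Finset.mem_insert]
    rw [Nat.lt_succ_iff, le_iff_eq_or_lt, Fin.val_inj, p.injective.eq_iff]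
  unfold cum
  rw [h, Finset.sum_insert (by simp), add_comm]

lemma cum_mono {m : ℕ} {lam : Fin m → ℝ} (hpos : ∀ α, 0 < lam α) (p : Equiv.Perm (Fin m)) :
    Monotone (cum lam p) := by
  intro i j hij
  apply Finset.sum_le_sum_of_subset_of_nonneg
  · intro β
    simp only [Finset.mem_filter, Finset.mem_univ, true_and]
    omega
  · intro β _ _
    exact (hpos β).le

section bounds

variable {m : ℕ} {lam : Fin m → ℝ}

lemma ietLeft_nonneg (hpos : ∀ α, 0 < lam α) (p : Equiv.Perm (Fin m)) (α : Fin m) :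
    0 ≤ ietLeft lam p α :=
  Finset.sum_nonneg fun β _ => (hpos β).le

lemma ietRight_le (hpos : ∀ α, 0 < lam α) (hsum : ∑ α, lam α = 1)
    (p : Equiv.Perm (Fin m)) (α : Fin m) : ietLeft lam p α + lam α ≤ 1 := by
  rw [ietLeft_eq_cum, ← cum_succ, ← hsum, ← cum_top lam p]
  exact cum_mono hpos p (p α).isLt

lemma ietRight_le_ietLeft (hpos : ∀ α, 0 < lam α) (p : Equiv.Perm (Fin m)) {α β : Fin m}
    (h : p α < p β) : ietLeft lam p α + lam α ≤ ietLeft lam p β := by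
  rw [ietLeft_eq_cum, ← cum_succ, ietLeft_eq_cum]
  exact cum_mono hpos p h

lemma disjoint_blocks (hpos : ∀ α, 0 < lam α) (p : Equiv.Perm (Fin m)) {α β : Fin m}
    (h : α ≠ β) {x : ℝ} (hα : x ∈ Ioo (ietLeft lam p α) (ietLeft lam p α + lam α))
    (hβ : x ∈ Ioo (ietLeft lam p β) (ietLeft lam p β + lam β)) : False := by
  rcases lt_or_gt_of_ne (p.injective.ne h) with h | h
  · have := ietRight_le_ietLeft hpos p h
    linarith [hα.2, hβ.1]
  · have := ietRight_le_ietLeft hpos p h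
    linarith [hβ.2, hα.1]

lemma exists_mem_Ico (hsum : ∑ α, lam α = 1) (p : Equiv.Perm (Fin m)) {x : ℝ}
    (hx : x ∈ Ico (0 : ℝ) 1) :
    ∃ α, x ∈ Ico (ietLeft lam p α) (ietLeft lam p α + lam α) := by
  have hex : ∃ i, x < cum lam p i := ⟨m, by rw [cum_top, hsum]; exact hx.2⟩
  classical
  obtain ⟨i, hi⟩ : ∃ i, Nat.find hex = i + 1 := by
    refine Nat.exists_eq_succ_of_ne_zero fun h0 => ?_
    have := Nat.find_spec hex
    rw [h0, cum_zero] at this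
    linarith [hx.1]
  have him : i < m := by
    have : Nat.find hex ≤ m := Nat.find_min' hex (by rw [cum_top, hsum]; exact hx.2)
    omega
  have h1 := Nat.find_spec hex
  have h2 : ¬ x < cum lam p i := Nat.find_min hex (by omega)
  have hp : ((p (p.symm ⟨i, him⟩) : Fin m) : ℕ) = i := by simp
  refine ⟨p.symm ⟨i, him⟩, ?_, ?_⟩
  · rw [ietLeft_eq_cum, hp]
    exact not_lt.mp h2
  · rw [ietLeft_eq_cum, ← cum_succ, hp, ← hi]
    exact h1

lemma exists_mem_Ioc (hsum : ∑ α, lam α = 1) (p : Equiv.Perm (Fin m)) {x : ℝ}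
    (hx : x ∈ Ioc (0 : ℝ) 1) :
    ∃ α, x ∈ Ioc (ietLeft lam p α) (ietLeft lam p α + lam α) := by
  have hex : ∃ i, x ≤ cum lam p i := ⟨m, by rw [cum_top, hsum]; exact hx.2⟩
  classical
  obtain ⟨i, hi⟩ : ∃ i, Nat.find hex = i + 1 := by
    refine Nat.exists_eq_succ_of_ne_zero fun h0 => ?_
    have := Nat.find_spec hex
    rw [h0, cum_zero] at this
    linarith [hx.1]
  have him : i < m := by
    have : Nat.find hex ≤ m := Nat.find_min' hex (by rw [cum_top, hsum]; exact hx.2)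
    omega
  have h1 := Nat.find_spec hex
  have h2 : ¬ x ≤ cum lam p i := Nat.find_min hex (by omega)
  have hp : ((p (p.symm ⟨i, him⟩) : Fin m) : ℕ) = i := by simp
  refine ⟨p.symm ⟨i, him⟩, ?_, ?_⟩
  · rw [ietLeft_eq_cum, hp]
    exact not_le.mp h2
  · rw [ietLeft_eq_cum, ← cum_succ, hp, ← hi]
    exact h1

end bounds

lemma ietW_eq {m : ℕ} (lam : Fin m → ℝ) (p0 p1 : Equiv.Perm (Fin m)) (α : Fin m) :
    ietW lam p0 p1 α = ietLeft lam p1 α - ietLeft lam p0 α := rfl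

/-! ### Uniform hitting times -/

/-- A right-continuous piecewise translation `S` of `[0,1)`, with left limits given by `L`, all of
whose forward orbits are dense, visits every open interval within a time that does not depend on
the starting point. Near a point `x`, the `S`-orbits of nearby points on the right follow that of
`x`, and those of points on the left follow the `L`-orbit of `x`; so, by compactness of `[0,1]`,
it suffices that `L`-orbits are dense. Such an orbit is eventually an `S`-orbit unless it returns
infinitely often to the finite set `B`, outside which `L = S`; in the latter case it is
periodic, and so is the `S`-orbit of a point slightly to the left, against density. -/
lemma uniform_hit (S L : ℝ → ℝ) (B : Set ℝ) (hB : B.Finite)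
    (hSm : ∀ x ∈ Ico (0 : ℝ) 1, S x ∈ Ico (0 : ℝ) 1)
    (hR : ∀ x ∈ Ico (0 : ℝ) 1, ∃ ε > 0, ∀ δ, 0 ≤ δ → δ < ε → S (x + δ) = S x + δ)
    (hLm : ∀ x ∈ Ioc (0 : ℝ) 1, L x ∈ Ioc (0 : ℝ) 1)
    (hL : ∀ x ∈ Ioc (0 : ℝ) 1, ∃ ε > 0, ∀ δ, 0 < δ → δ < ε → S (x - δ) = L x - δ)
    (hLS : ∀ x ∈ Ioc (0 : ℝ) 1, x ∉ B → x ∈ Ico (0 : ℝ) 1 ∧ L x = S x)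
    (hmin : IsMinimalOn S (Ico (0 : ℝ) 1)) (u v : ℝ) (huv : u < v) (hu : 0 ≤ u) (hv : v ≤ 1) :
    ∃ N : ℕ, ∀ x ∈ Ico (0 : ℝ) 1, ∃ k ≤ N, S^[k] x ∈ Ioo u v := by
  have hSk : ∀ k : ℕ, ∀ x ∈ Ico (0 : ℝ) 1, S^[k] x ∈ Ico (0 : ℝ) 1 := by
    intro k
    induction k with
    | zero => exact fun x hx => hx
    | succ k ih => exact fun x hx => by rw [Function.iterate_succ_apply']; exact hSm _ (ih x hx)
  have hLk : ∀ k : ℕ, ∀ x ∈ Ioc (0 : ℝ) 1, L^[k] x ∈ Ioc (0 : ℝ) 1 := by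
    intro k
    induction k with
    | zero => exact fun x hx => hx
    | succ k ih => exact fun x hx => by rw [Function.iterate_succ_apply']; exact hLm _ (ih x hx)
  have hRk : ∀ k : ℕ, ∀ x ∈ Ico (0 : ℝ) 1, ∃ ε > 0, ∀ δ, 0 ≤ δ → δ < ε →
      S^[k] (x + δ) = S^[k] x + δ := by
    intro k x hx
    induction k with
    | zero => exact ⟨1, one_pos, fun δ _ _ => rfl⟩
    | succ k ih =>
      obtain ⟨ε, hε, h⟩ := ih
      obtain ⟨ε', hε', h'⟩ := hR _ (hSk k x hx)
      refine ⟨min ε ε', lt_min hε hε', fun δ h0 h1 => ?_⟩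
      rw [Function.iterate_succ_apply', Function.iterate_succ_apply',
        h δ h0 (h1.trans_le (min_le_left _ _)), h' δ h0 (h1.trans_le (min_le_right _ _))]
  have hLSk : ∀ k : ℕ, ∀ x ∈ Ioc (0 : ℝ) 1, ∃ ε > 0, ∀ δ, 0 < δ → δ < ε →
      S^[k] (x - δ) = L^[k] x - δ := by
    intro k x hx
    induction k with
    | zero => exact ⟨1, one_pos, fun δ _ _ => rfl⟩
    | succ k ih =>
      obtain ⟨ε, hε, h⟩ := ih
      obtain ⟨ε', hε', h'⟩ := hL _ (hLk k x hx)
      refine ⟨min ε ε', lt_min hε hε', fun δ h0 h1 => ?_⟩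
      rw [Function.iterate_succ_apply', Function.iterate_succ_apply',
        h δ h0 (h1.trans_le (min_le_left _ _)), h' δ h0 (h1.trans_le (min_le_right _ _))]
  have hmid : (u + v) / 2 ∈ Ico (0 : ℝ) 1 := ⟨by linarith, by linarith⟩
  have hitS : ∀ x ∈ Ico (0 : ℝ) 1, ∃ k : ℕ, S^[k] x ∈ Ioo u v := by
    intro x hx
    obtain ⟨z, hz, k, rfl⟩ := mem_closure_iff.mp (hmin x hx hmid) (Ioo u v) isOpen_Ioo
      ⟨by linarith, by linarith⟩
    exact ⟨k, hz⟩
  have noper : ∀ x ∈ Ico (0 : ℝ) 1, ∀ p : ℕ, 0 < p → S^[p] x ≠ x := by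
    intro x hx p hp hper
    have hfin : (range fun k : ℕ => S^[k] x).Finite := by
      refine ((Finset.range p).finite_toSet.image fun k => S^[k] x).subset ?_
      rintro _ ⟨k, rfl⟩
      refine ⟨k % p, by simpa using Nat.mod_lt k hp, ?_⟩
      exact Function.IsPeriodicPt.iterate_mod_apply (f := S) hper k
    have hsub := hmin x hx
    rw [hfin.isClosed.closure_eq] at hsub
    exact (Ico_infinite (zero_lt_one' ℝ)) (hfin.subset hsub)
  have hitL : ∀ x ∈ Ioc (0 : ℝ) 1, ∃ k : ℕ, L^[k] x ∈ Ioo u v := by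
    intro x hx
    by_cases hev : ∃ K, ∀ k ≥ K, L^[k] x ∉ B
    · obtain ⟨K, hK⟩ := hev
      have hagree : ∀ j : ℕ, L^[K + j] x = S^[j] (L^[K] x) := by
        intro j
        induction j with
        | zero => rfl
        | succ j ih =>
          rw [← add_assoc, Function.iterate_succ_apply', Function.iterate_succ_apply', ← ih]
          exact (hLS _ (hLk _ x hx) (hK _ (by omega))).2
      obtain ⟨k, hk⟩ := hitS _ (hLS _ (hLk K x hx) (hK K le_rfl)).1
      exact ⟨K + k, by rw [hagree]; exact hk⟩
    · exfalso
      push Not at hev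
      have hinf : {k : ℕ | L^[k] x ∈ B}.Infinite := by
        rw [Set.infinite_iff_exists_gt]
        intro K
        obtain ⟨k, hk, hkB⟩ := hev (K + 1)
        exact ⟨k, hkB, by omega⟩
      obtain ⟨i, -, j, -, hij, he⟩ := hinf.exists_lt_map_eq_of_mapsTo (f := fun k => L^[k] x)
        (fun k hk => hk) hB
      have hd := hLk i x hx
      have hper : L^[j - i] (L^[i] x) = L^[i] x := by
        rw [← Function.iterate_add_apply, Nat.sub_add_cancel hij.le]
        exact he.symm
      obtain ⟨ε, hε, h⟩ := hLSk (j - i) _ hd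
      obtain ⟨δ, h0, h1⟩ := exists_between (lt_min hε hd.1)
      have h2 := h δ h0 (h1.trans_le (min_le_left _ _))
      have h3 := h1.trans_le (min_le_right _ _)
      rw [hper] at h2
      exact noper _ ⟨by linarith, by linarith [hd.2]⟩ (j - i) (by omega) h2
  have key : ∃ N : ℕ, ∀ x ∈ Icc (0 : ℝ) 1, x ∈ Ico (0 : ℝ) 1 → ∃ k ≤ N, S^[k] x ∈ Ioo u v := by
    refine isCompact_Icc.induction_on
      (p := fun s => ∃ N : ℕ, ∀ x ∈ s, x ∈ Ico (0 : ℝ) 1 → ∃ k ≤ N, S^[k] x ∈ Ioo u v)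
      ⟨0, by simp⟩ ?_ ?_ ?_
    · rintro s t hst ⟨N, hN⟩
      exact ⟨N, fun x hx => hN x (hst hx)⟩
    · rintro s t ⟨N, hN⟩ ⟨N', hN'⟩
      refine ⟨max N N', fun x hx h => ?_⟩
      rcases hx with hx | hx
      · obtain ⟨k, hk, hk'⟩ := hN x hx h
        exact ⟨k, hk.trans (le_max_left _ _), hk'⟩
      · obtain ⟨k, hk, hk'⟩ := hN' x hx h
        exact ⟨k, hk.trans (le_max_right _ _), hk'⟩
    · intro x hx
      have hright : ∃ ε > 0, ∃ N : ℕ, ∀ y ∈ Ico (0 : ℝ) 1, x ≤ y → y < x + ε →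
          ∃ k ≤ N, S^[k] y ∈ Ioo u v := by
        rcases hx.2.lt_or_eq with h1 | h1
        · obtain ⟨k, hk⟩ := hitS x ⟨hx.1, h1⟩
          obtain ⟨ε, hε, h⟩ := hRk k x ⟨hx.1, h1⟩
          refine ⟨min ε (v - S^[k] x), lt_min hε (by linarith [hk.2]), k, fun y _ hxy hy => ?_⟩
          have h3 := min_le_left ε (v - S^[k] x)
          have h4 := min_le_right ε (v - S^[k] x)
          have h2 := h (y - x) (by linarith) (by linarith)
          rw [add_sub_cancel] at h2
          exact ⟨k, le_rfl, by rw [h2]; exact ⟨by linarith [hk.1], by linarith⟩⟩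
        · exact ⟨1, one_pos, 0, fun y hy hxy _ => absurd hy.2 (by linarith)⟩
      have hleft : ∃ ε > 0, ∃ N : ℕ, ∀ y ∈ Ico (0 : ℝ) 1, y < x → x - ε < y →
          ∃ k ≤ N, S^[k] y ∈ Ioo u v := by
        rcases hx.1.lt_or_eq with h1 | h1
        · obtain ⟨k, hk⟩ := hitL x ⟨h1, hx.2⟩
          obtain ⟨ε, hε, h⟩ := hLSk k x ⟨h1, hx.2⟩
          refine ⟨min ε (L^[k] x - u), lt_min hε (by linarith [hk.1]), k, fun y _ hxy hy => ?_⟩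
          have h3 := min_le_left ε (L^[k] x - u)
          have h4 := min_le_right ε (L^[k] x - u)
          have h2 := h (x - y) (by linarith) (by linarith)
          rw [sub_sub_cancel] at h2
          exact ⟨k, le_rfl, by rw [h2]; exact ⟨by linarith, by linarith [hk.2]⟩⟩
        · exact ⟨1, one_pos, 0, fun y hy hxy _ => absurd hy.1 (by linarith)⟩
      obtain ⟨ε, hε, N, hN⟩ := hright
      obtain ⟨ε', hε', N', hN'⟩ := hleft
      refine ⟨Ioo (x - ε') (x + ε),
        mem_nhdsWithin_of_mem_nhds (Ioo_mem_nhds (by linarith) (by linarith)),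
        max N N', fun y hy hy1 => ?_⟩
      rcases le_or_gt x y with hxy | hxy
      · obtain ⟨k, hk, hk'⟩ := hN y hy1 hxy hy.2
        exact ⟨k, hk.trans (le_max_left _ _), hk'⟩
      · obtain ⟨k, hk, hk'⟩ := hN' y hy1 hxy hy.1
        exact ⟨k, hk.trans (le_max_right _ _), hk'⟩
  obtain ⟨N, hN⟩ := key
  exact ⟨N, fun x hx => hN x ⟨hx.1, hx.2.le⟩ hx⟩

/-- Uniform hitting times for a minimal interval exchange transformation. -/
lemma IsIET.uniform_hit {m : ℕ} {lam : Fin m → ℝ} {p0 p1 : Equiv.Perm (Fin m)} {S : ℝ → ℝ}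
    (hS : IsIET lam p0 p1 S) (hmin : IsMinimalOn S (Ico (0 : ℝ) 1))
    (u v : ℝ) (huv : u < v) (hu : 0 ≤ u) (hv : v ≤ 1) :
    ∃ N : ℕ, ∀ x ∈ Ico (0 : ℝ) 1, ∃ k ≤ N, S^[k] x ∈ Ioo u v := by
  obtain ⟨hpos, hsum, hSx⟩ := hS
  have : Nonempty (Fin m) :=
    ⟨(exists_mem_Ico hsum p0 (x := 0) ⟨le_rfl, one_pos⟩).choose⟩
  choose! A hA using fun x (hx : x ∈ Ioc (0 : ℝ) 1) => exists_mem_Ioc hsum p0 hx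
  refine IETcore.uniform_hit S (fun x => x + ietW lam p0 p1 (A x))
    (range fun α => ietLeft lam p0 α + lam α) (finite_range _) ?_ ?_ ?_ ?_ ?_ hmin u v huv hu hv
  · intro x hx
    obtain ⟨α, hα⟩ := exists_mem_Ico hsum p0 hx
    rw [hSx α x hα, ietW_eq]
    have := ietLeft_nonneg hpos p1 α
    have := ietRight_le hpos hsum p1 α
    exact ⟨by linarith [hα.1], by linarith [hα.2]⟩
  · intro x hx
    obtain ⟨α, hα⟩ := exists_mem_Ico hsum p0 hx
    refine ⟨ietLeft lam p0 α + lam α - x, by linarith [hα.2], fun δ h0 h1 => ?_⟩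
    rw [hSx α x hα, hSx α (x + δ) ⟨by linarith [hα.1], by linarith⟩]
    ring
  · intro x hx
    have hα := hA x hx
    have := ietLeft_nonneg hpos p1 (A x)
    have := ietRight_le hpos hsum p1 (A x)
    simp only [ietW_eq]
    exact ⟨by linarith [hα.1], by linarith [hα.2]⟩
  · intro x hx
    have hα := hA x hx
    refine ⟨x - ietLeft lam p0 (A x), by linarith [hα.1], fun δ h0 h1 => ?_⟩
    rw [hSx (A x) (x - δ) ⟨by linarith, by linarith [hα.2]⟩]
    ring
  · intro x hx hxB
    have hα := hA x hx
    have hlt : x < ietLeft lam p0 (A x) + lam (A x) :=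
      lt_of_le_of_ne hα.2 fun h => hxB ⟨A x, h.symm⟩
    have := ietRight_le hpos hsum p0 (A x)
    exact ⟨⟨hx.1.le, by linarith⟩, (hSx (A x) x ⟨hα.1.le, hlt⟩).symm⟩

/-! ### The flipped exchange -/

section construction

variable {m : ℕ} {lam : Fin m → ℝ} {p0 p1 : Equiv.Perm (Fin m)} {S T : ℝ → ℝ} {α₀ : Fin m}

lemma ietLeft_first (hα₀ : (p1 α₀ : ℕ) = 0) : ietLeft lam p1 α₀ = 0 := by
  rw [ietLeft_eq_cum, hα₀, cum_zero]

lemma IsIET.eq_on (hS : IsIET lam p0 p1 S) {α : Fin m} {x : ℝ}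
    (hx : x ∈ Ioo (ietLeft lam p0 α) (ietLeft lam p0 α + lam α)) :
    S x = x + (ietLeft lam p1 α - ietLeft lam p0 α) :=
  hS.2.2 α x ⟨hx.1.le, hx.2⟩

lemma IsIET.mem_Ioo (hS : IsIET lam p0 p1 S) {α : Fin m} {x : ℝ}
    (hx : x ∈ Ioo (ietLeft lam p0 α) (ietLeft lam p0 α + lam α)) :
    S x ∈ Ioo (0 : ℝ) 1 := by
  rw [hS.eq_on hx]
  have := ietLeft_nonneg hS.1 p1 α
  have := ietRight_le hS.1 hS.2.1 p1 α
  exact ⟨by linarith [hx.1], by linarith [hx.2]⟩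

/-- On the flipped interval `I_{α₀}`, two steps of `T` make one step of `S`: the two reflections
compose to the translation by `-ietLeft lam p0 α₀`. -/
lemma two_steps (hS : IsIET lam p0 p1 S) (hα₀ : (p1 α₀ : ℕ) = 0)
    (hT₂ : ∀ x ∈ Ioo (ietLeft lam p0 α₀) (ietLeft lam p0 α₀ + lam α₀),
      T x = 1 - x + (ietLeft lam p0 α₀ + lam α₀))
    (hT₃ : ∀ x ∈ Ioo (1 : ℝ) (1 + lam α₀), T x = 1 - x + lam α₀)
    {x : ℝ} (hx : x ∈ Ioo (ietLeft lam p0 α₀) (ietLeft lam p0 α₀ + lam α₀)) :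
    T x ∈ Ioo (1 : ℝ) (1 + lam α₀) ∧ T (T x) = S x := by
  have h1 : T x ∈ Ioo (1 : ℝ) (1 + lam α₀) := by
    rw [hT₂ x hx]
    exact ⟨by linarith [hx.2], by linarith [hx.1]⟩
  refine ⟨h1, ?_⟩
  rw [hT₃ _ h1, hT₂ x hx, hS.eq_on hx, ietLeft_first hα₀]
  ring

/-- Density in `[0, 1 + λ_{α₀})` follows from visits to all open subintervals of `(0,1)`: the flip
carries visits to `I_{α₀}` over to `(1, 1 + λ_{α₀})`. -/
lemma dense_of_hits (hS : IsIET lam p0 p1 S)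
    (hT₂ : ∀ x ∈ Ioo (ietLeft lam p0 α₀) (ietLeft lam p0 α₀ + lam α₀),
      T x = 1 - x + (ietLeft lam p0 α₀ + lam α₀))
    (R : Set ℝ)
    (hR : ∀ u v : ℝ, u < v → 0 ≤ u → v ≤ 1 → ∃ r ∈ R, r ∈ Ioo u v ∧ T r ∈ R) :
    Ico (0 : ℝ) (1 + lam α₀) ⊆ closure R := by
  have ha0 := ietLeft_nonneg hS.1 p0 α₀
  have ha1 := ietRight_le hS.1 hS.2.1 p0 α₀
  have hl := hS.1 α₀
  set a := ietLeft lam p0 α₀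
  set l := lam α₀
  have h1 : Ioo (0 : ℝ) 1 ⊆ closure R := by
    intro z hz
    rw [Metric.mem_closure_iff]
    intro ε hε
    obtain ⟨r, hr, hrm, -⟩ := hR z (min (z + ε) 1) (lt_min (by linarith) hz.2) hz.1.le
      (min_le_right _ _)
    refine ⟨r, hr, ?_⟩
    have := hrm.2.trans_le (min_le_left _ _)
    rw [Real.dist_eq, abs_sub_lt_iff]
    exact ⟨by linarith [hrm.1], by linarith⟩
  have h2 : Ioo (1 : ℝ) (1 + l) ⊆ closure R := by
    intro z hz
    rw [Metric.mem_closure_iff]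
    intro ε hε
    -- `1 + a + l - z` is the preimage of `z` under the flip of `I_{α₀}`
    obtain ⟨r, hr, hrm, hTr⟩ := hR (1 + a + l - z) (min (1 + a + l - z + ε) (a + l))
      (lt_min (by linarith) (by linarith [hz.1])) (by linarith [hz.2])
      ((min_le_right _ _).trans ha1)
    refine ⟨T r, hTr, ?_⟩
    have h3 := hrm.2.trans_le (min_le_left _ _)
    have h4 := hrm.2.trans_le (min_le_right _ _)
    rw [hT₂ r ⟨by linarith [hrm.1, hz.2], h4⟩, Real.dist_eq, abs_sub_lt_iff]
    exact ⟨by linarith, by linarith [hrm.1]⟩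
  have h1' := closure_minimal h1 isClosed_closure
  have h2' := closure_minimal h2 isClosed_closure
  rw [closure_Ioo (by norm_num)] at h1'
  rw [closure_Ioo (by linarith)] at h2'
  intro z hz
  rcases le_total z 1 with h | h
  · exact h1' ⟨hz.1, h⟩
  · exact h2' ⟨h, hz.2.le⟩

lemma forward_dense (hS : IsIET lam p0 p1 S) (hmin : IsMinimalOn S (Ico (0 : ℝ) 1))
    (hα₀ : (p1 α₀ : ℕ) = 0)
    (hT₁ : ∀ α : Fin m, α ≠ α₀ →
      ∀ x ∈ Ioo (ietLeft lam p0 α) (ietLeft lam p0 α + lam α), T x = S x)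
    (hT₂ : ∀ x ∈ Ioo (ietLeft lam p0 α₀) (ietLeft lam p0 α₀ + lam α₀),
      T x = 1 - x + (ietLeft lam p0 α₀ + lam α₀))
    (hT₃ : ∀ x ∈ Ioo (1 : ℝ) (1 + lam α₀), T x = 1 - x + lam α₀) (x : ℝ)
    (hx : ∀ k : ℕ, T^[k] x ∈
        (⋃ α : Fin m, Ioo (ietLeft lam p0 α) (ietLeft lam p0 α + lam α)) ∪
          Ioo (1 : ℝ) (1 + lam α₀)) :
    Ico (0 : ℝ) (1 + lam α₀) ⊆ closure (range fun k : ℕ => T^[k] x) := by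
  have ha0 := ietLeft_nonneg hS.1 p0
  have ha1 := ietRight_le hS.1 hS.2.1 p0
  obtain ⟨k₀, hk₀⟩ : ∃ k, T^[k] x ∈ Ico (0 : ℝ) 1 := by
    rcases hx 0 with h | h
    · obtain ⟨α, hα⟩ := mem_iUnion.mp h
      exact ⟨0, by linarith [hα.1, ha0 α], by linarith [hα.2, ha1 α]⟩
    · refine ⟨1, ?_⟩
      have h' : x ∈ Ioo (1 : ℝ) (1 + lam α₀) := h
      rw [Function.iterate_one, hT₃ x h']
      exact ⟨by linarith [h'.2], by linarith [h'.1, ha0 α₀, ha1 α₀]⟩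
  have horb : ∀ j : ℕ, ∃ k, T^[k] x = S^[j] (T^[k₀] x) ∧ T^[k] x ∈ Ico (0 : ℝ) 1 := by
    intro j
    induction j with
    | zero => exact ⟨k₀, rfl, hk₀⟩
    | succ j ih =>
      obtain ⟨k, hk, hk1⟩ := ih
      rw [Function.iterate_succ_apply', ← hk]
      rcases hx k with h | h
      · obtain ⟨α, hα⟩ := mem_iUnion.mp h
        have hmem := hS.mem_Ioo hα
        by_cases hαα : α = α₀
        · subst hαα
          have h2 := (two_steps hS hα₀ hT₂ hT₃ hα).2
          refine ⟨k + 2, ?_⟩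
          rw [Function.iterate_succ_apply', Function.iterate_succ_apply', h2]
          exact ⟨rfl, hmem.1.le, hmem.2⟩
        · refine ⟨k + 1, ?_⟩
          rw [Function.iterate_succ_apply', hT₁ α hαα _ hα]
          exact ⟨rfl, hmem.1.le, hmem.2⟩
      · exact absurd hk1.2 (not_lt.mpr h.1.le)
  refine dense_of_hits hS hT₂ _ fun u v huv hu hv => ?_
  obtain ⟨N, hN⟩ := hS.uniform_hit hmin u v huv hu hv
  obtain ⟨j, -, hj⟩ := hN _ hk₀
  obtain ⟨k, hk, -⟩ := horb j
  exact ⟨T^[k] x, ⟨k, rfl⟩, by rw [hk]; exact hj, k + 1, Function.iterate_succ_apply' T k x⟩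

/-- A backward orbit read in reverse from a far enough point is a finite forward orbit, so the
uniform hitting times of `S` apply. -/
lemma backward_dense (hS : IsIET lam p0 p1 S) (hmin : IsMinimalOn S (Ico (0 : ℝ) 1))
    (hα₀ : (p1 α₀ : ℕ) = 0)
    (hT₁ : ∀ α : Fin m, α ≠ α₀ →
      ∀ x ∈ Ioo (ietLeft lam p0 α) (ietLeft lam p0 α + lam α), T x = S x)
    (hT₂ : ∀ x ∈ Ioo (ietLeft lam p0 α₀) (ietLeft lam p0 α₀ + lam α₀),
      T x = 1 - x + (ietLeft lam p0 α₀ + lam α₀))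
    (hT₃ : ∀ x ∈ Ioo (1 : ℝ) (1 + lam α₀), T x = 1 - x + lam α₀) (y : ℕ → ℝ)
    (hy : ∀ k : ℕ, y (k + 1) ∈
        ((⋃ α : Fin m, Ioo (ietLeft lam p0 α) (ietLeft lam p0 α + lam α)) ∪
          Ioo (1 : ℝ) (1 + lam α₀)) ∧ T (y (k + 1)) = y k) :
    Ico (0 : ℝ) (1 + lam α₀) ⊆ closure (range y) := by
  have ha0 := ietLeft_nonneg hS.1 p0
  have ha1 := ietRight_le hS.1 hS.2.1 p0
  have hstart : ∀ M : ℕ, ∃ i ≥ M, y i ∈ Ico (0 : ℝ) 1 := by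
    intro M
    rcases (hy (M + 1)).1 with h | h
    · obtain ⟨α, hα⟩ := mem_iUnion.mp h
      exact ⟨M + 2, by omega, by linarith [hα.1, ha0 α], by linarith [hα.2, ha1 α]⟩
    · refine ⟨M + 1, by omega, ?_⟩
      rw [← (hy (M + 1)).2, hT₃ _ h]
      exact ⟨by linarith [h.2], by linarith [h.1, ha0 α₀, ha1 α₀]⟩
  -- each step of `S` costs at most two steps of `T`
  have horb : ∀ M j : ℕ, y M ∈ Ico (0 : ℝ) 1 → 2 * j ≤ M →
      ∃ i, M ≤ i + 2 * j ∧ y i = S^[j] (y M) ∧ y i ∈ Ico (0 : ℝ) 1 := by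
    intro M j hM
    induction j with
    | zero => exact fun _ => ⟨M, by omega, rfl, hM⟩
    | succ j ih =>
      intro hj
      obtain ⟨i, hi, hyi, hi1⟩ := ih (by omega)
      obtain ⟨i, rfl⟩ : ∃ i', i = i' + 1 + 1 := ⟨i - 2, by omega⟩
      rw [Function.iterate_succ_apply', ← hyi]
      rcases (hy (i + 1)).1 with h | h
      · obtain ⟨α, hα⟩ := mem_iUnion.mp h
        have hmem := hS.mem_Ioo hα
        by_cases hαα : α = α₀
        · subst hαα
          have h2 := (two_steps hS hα₀ hT₂ hT₃ hα).2
          rw [(hy (i + 1)).2, (hy i).2] at h2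
          refine ⟨i, by omega, ?_⟩
          rw [h2]
          exact ⟨rfl, hmem.1.le, hmem.2⟩
        · refine ⟨i + 1, by omega, ?_⟩
          rw [← (hy (i + 1)).2, hT₁ α hαα _ hα]
          exact ⟨rfl, hmem.1.le, hmem.2⟩
      · exact absurd hi1.2 (not_lt.mpr h.1.le)
  refine dense_of_hits hS hT₂ _ fun u v huv hu hv => ?_
  obtain ⟨N, hN⟩ := hS.uniform_hit hmin u v huv hu hv
  obtain ⟨M, hM, hM1⟩ := hstart (2 * N + 1)
  obtain ⟨j, hjN, hj⟩ := hN _ hM1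
  obtain ⟨i, hi, hyi, -⟩ := horb M j hM1 (by omega)
  obtain ⟨i, rfl⟩ : ∃ i', i = i' + 1 := ⟨i - 1, by omega⟩
  exact ⟨y (i + 1), ⟨_, rfl⟩, by rw [hyi]; exact hj, i, ((hy i).2).symm⟩

/-- The range of `T` on its pieces: `some α` stands for the interior of `S(I_α)` and `none`
for the added interval `(1, 1 + λ_{α₀})`. -/
noncomputable def block (lam : Fin m → ℝ) (p1 : Equiv.Perm (Fin m)) (α₀ : Fin m) :
    Option (Fin m) → Set ℝ
  | some α => Ioo (ietLeft lam p1 α) (ietLeft lam p1 α + lam α)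
  | none => Ioo 1 (1 + lam α₀)

lemma block_disjoint (hpos : ∀ α, 0 < lam α) (hsum : ∑ α, lam α = 1) {s t : Option (Fin m)}
    (hst : s ≠ t) {x : ℝ} (hs : x ∈ block lam p1 α₀ s) (ht : x ∈ block lam p1 α₀ t) : False := by
  have h1 := ietRight_le hpos hsum p1
  rcases s with _ | α <;> rcases t with _ | β
  · exact hst rfl
  · linarith [hs.1, ht.2, h1 β]
  · linarith [ht.1, hs.2, h1 α]
  · exact disjoint_blocks hpos p1 (fun h => hst (by rw [h])) hs ht

lemma block_subset (hpos : ∀ α, 0 < lam α) (hsum : ∑ α, lam α = 1) {s : Option (Fin m)}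
    {x : ℝ} (hs : x ∈ block lam p1 α₀ s) : x ∈ Ico 0 (1 + lam α₀) := by
  rcases s with _ | α
  · exact ⟨by linarith [hs.1], hs.2⟩
  · exact ⟨by linarith [hs.1, ietLeft_nonneg hpos p1 α],
      by linarith [hs.2, ietRight_le hpos hsum p1 α, hpos α₀]⟩

/-- The flipped exchange before rescaling: the `i`-th piece is `(b i, b (i+1))`, on which `T` is
`x ↦ w i - x` or `x ↦ x + w i` with image in the block `t i`, where `t` is injective. -/
lemma exists_pieces (hS : IsIET lam p0 p1 S) (hα₀ : (p1 α₀ : ℕ) = 0)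
    (hT₁ : ∀ α : Fin m, α ≠ α₀ →
      ∀ x ∈ Ioo (ietLeft lam p0 α) (ietLeft lam p0 α + lam α), T x = S x)
    (hT₂ : ∀ x ∈ Ioo (ietLeft lam p0 α₀) (ietLeft lam p0 α₀ + lam α₀),
      T x = 1 - x + (ietLeft lam p0 α₀ + lam α₀))
    (hT₃ : ∀ x ∈ Ioo (1 : ℝ) (1 + lam α₀), T x = 1 - x + lam α₀) :
    ∃ b : ℕ → ℝ, b 0 = 0 ∧ b (m + 1) = 1 + lam α₀ ∧ (∀ i < m + 1, b i < b (i + 1)) ∧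
    ∃ fl : ℕ → Bool, fl m = true ∧ ∃ w : ℕ → ℝ, ∃ t : ℕ → Option (Fin m),
      (∀ i < m + 1, ∀ j < m + 1, i ≠ j → t i ≠ t j) ∧
      ∀ i < m + 1, ∀ x ∈ Ioo (b i) (b (i + 1)),
        T x = (if fl i then w i - x else x + w i) ∧ T x ∈ block lam p1 α₀ (t i) := by
  classical
  have hb : ∀ i (h : i < m), cum lam p0 i = ietLeft lam p0 (p0.symm ⟨i, h⟩) ∧
      cum lam p0 (i + 1) = ietLeft lam p0 (p0.symm ⟨i, h⟩) + lam (p0.symm ⟨i, h⟩) := by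
    intro i h
    rw [ietLeft_eq_cum, ← cum_succ]
    simp
  have hbm : cum lam p0 m = 1 := by rw [cum_top, hS.2.1]
  refine ⟨fun i => if i ≤ m then cum lam p0 i else 1 + lam α₀, by simp [cum_zero], by simp, ?_,
    fun i => if h : i < m then decide (p0.symm ⟨i, h⟩ = α₀) else true, by simp,
    fun i => if h : i < m then
      (if p0.symm ⟨i, h⟩ = α₀ then 1 + (ietLeft lam p0 α₀ + lam α₀)
        else ietW lam p0 p1 (p0.symm ⟨i, h⟩)) else 1 + lam α₀,
    fun i => if h : i < m then
      (if p0.symm ⟨i, h⟩ = α₀ then none else some (p0.symm ⟨i, h⟩)) else some α₀, ?_, ?_⟩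
  · intro i hi
    rcases (Nat.lt_succ_iff.mp hi).lt_or_eq with h | rfl
    · simp only [h.le, Nat.succ_le_iff.mpr h, if_true, (hb i h).1, (hb i h).2]
      linarith [hS.1 (p0.symm ⟨i, h⟩)]
    · simp [hbm, hS.1 α₀]
  · intro i hi j hj hij
    have hinj : ∀ (h : i < m) (h' : j < m), p0.symm ⟨i, h⟩ ≠ p0.symm ⟨j, h'⟩ := by
      intro h h' he
      exact hij (by simpa using he)
    dsimp only
    split_ifs with h1 h2 h3 h4 h5 h6 h7 h8 <;> first | omega | grind
  · intro i hi x hx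
    rcases (Nat.lt_succ_iff.mp hi).lt_or_eq with h | rfl
    · simp only [h.le, Nat.succ_le_iff.mpr h, if_true, (hb i h).1, (hb i h).2] at hx
      simp only [h, dif_pos]
      by_cases hα : p0.symm ⟨i, h⟩ = α₀
      · rw [hα] at hx
        simp only [hα, decide_true, if_true]
        exact ⟨by rw [hT₂ x hx]; ring, (two_steps hS hα₀ hT₂ hT₃ hx).1⟩
      · simp only [hα, decide_false, if_false, Bool.false_eq_true]
        rw [hT₁ _ hα x hx, hS.eq_on hx]
        exact ⟨rfl, by linarith [hx.1], by linarith [hx.2]⟩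
    · simp only [le_refl, if_true, hbm] at hx
      have hx' : x ∈ Ioo 1 (1 + lam α₀) := by simpa using hx
      simp only [lt_irrefl, dif_neg, not_false_eq_true, if_true]
      rw [hT₃ x hx']
      refine ⟨by ring, ?_⟩
      simp only [block, ietLeft_first hα₀]
      exact ⟨by linarith [hx'.2], by linarith [hx'.1]⟩

lemma isFIETon_rescaled (hS : IsIET lam p0 p1 S) (hα₀ : (p1 α₀ : ℕ) = 0)
    (hT₁ : ∀ α : Fin m, α ≠ α₀ →
      ∀ x ∈ Ioo (ietLeft lam p0 α) (ietLeft lam p0 α + lam α), T x = S x)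
    (hT₂ : ∀ x ∈ Ioo (ietLeft lam p0 α₀) (ietLeft lam p0 α₀ + lam α₀),
      T x = 1 - x + (ietLeft lam p0 α₀ + lam α₀))
    (hT₃ : ∀ x ∈ Ioo (1 : ℝ) (1 + lam α₀), T x = 1 - x + lam α₀) :
    IsFIETon (m + 1) (fun y => T ((1 + lam α₀) * y) / (1 + lam α₀)) := by
  obtain ⟨b, hb0, hb1, hbi, fl, hfl, w, t, ht, hT⟩ := exists_pieces hS hα₀ hT₁ hT₂ hT₃
  have hl := hS.1 α₀
  have hdisj := @block_disjoint m lam p1 α₀ hS.1 hS.2.1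
  have hsub := @block_subset m lam p1 α₀ hS.1 hS.2.1
  set D := 1 + lam α₀ with hD
  have hD0 : 0 < D := by linarith
  have key : ∀ i < m + 1, ∀ x ∈ Ioo (b i / D) (b (i + 1) / D),
      T (D * x) / D = (if fl i then w i / D - x else x + w i / D) ∧
        T (D * x) ∈ block lam p1 α₀ (t i) := by
    intro i hi x hx
    obtain ⟨h1, h2⟩ := hT i hi (D * x)
      ⟨by have := (div_lt_iff₀ hD0).mp hx.1; linarith,
       by have := (lt_div_iff₀ hD0).mp hx.2; linarith⟩
    refine ⟨?_, h2⟩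
    rw [h1]
    split_ifs <;> field_simp
  refine ⟨fun i => b i / D, by simp [hb0], by simp only [hb1]; exact div_self hD0.ne',
    fun i hi => div_lt_div_of_pos_right (hbi i hi) hD0, fl, ⟨m, by omega, hfl⟩,
    fun i => w i / D, fun i hi x hx => (key i hi x hx).1, ?_, ?_⟩
  · rintro i hi _ ⟨x, hx, rfl⟩
    obtain ⟨h1, h2⟩ := key i hi x hx
    have h3 := hsub h2
    simp only [← h1]
    exact ⟨div_nonneg h3.1 hD0.le, (div_lt_one hD0).mpr h3.2⟩
  · intro i hi j hj hij
    rw [Set.disjoint_left]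
    rintro _ ⟨x, hx, rfl⟩ ⟨x', hx', he⟩
    obtain ⟨h1, h2⟩ := key i hi x hx
    obtain ⟨h1', h2'⟩ := key j hj x' hx'
    simp only [← h1, ← h1'] at he
    rw [div_left_inj' hD0.ne'] at he
    rw [he] at h2'
    exact hdisj (ht i hi j hj hij) h2 h2'

end construction

/-- **Nogueira's construction of minimal fIETs from minimal IETs.**
Let `S` be a minimal IET of `[0,1)` on `m` intervals, `α₀` the letter with
`π₁(α₀) = 1`, so `I_{α₀} = [β_{i₀−1}, β_{i₀})`.  Define `T` on `[0, 1 + λ_{α₀})` by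
`T = S` on `int I_α` for `α ≠ α₀`, `T x = 1 − x + β_{i₀}` on `int I_{α₀}`, and
`T x = 1 − x + β_{i₀} − β_{i₀−1}` on `(1, 1 + λ_{α₀})`.  Then:
(i) after rescaling to unit length, `T` is an fIET on `m + 1` intervals with nonempty
flip set; (ii) the first return map of `T` to `[0,1)` coincides with `S` on the
interiors of the intervals `I_α`; (iii) `T` is minimal: every forward orbit defined
for all times and every backward orbit defined for all times is dense in
`[0, 1 + λ_{α₀})`. -/
theorem minimal_fIET_from_minimal_IET (m : ℕ) (hm : 1 ≤ m)
    (lam : Fin m → ℝ) (p0 p1 : Equiv.Perm (Fin m)) (S : ℝ → ℝ)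
    (hS : IsIET lam p0 p1 S)
    (hmin : IsMinimalOn S (Ico (0 : ℝ) 1))
    (α₀ : Fin m) (hα₀ : (p1 α₀ : ℕ) = 0)
    (T : ℝ → ℝ)
    (hT₁ : ∀ α : Fin m, α ≠ α₀ →
      ∀ x ∈ Ioo (ietLeft lam p0 α) (ietLeft lam p0 α + lam α), T x = S x)
    (hT₂ : ∀ x ∈ Ioo (ietLeft lam p0 α₀) (ietLeft lam p0 α₀ + lam α₀),
      T x = 1 - x + (ietLeft lam p0 α₀ + lam α₀))
    (hT₃ : ∀ x ∈ Ioo (1 : ℝ) (1 + lam α₀), T x = 1 - x + lam α₀) :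
    -- (i) rescaled to unit length, `T` is an fIET on `m + 1` intervals
    IsFIETon (m + 1) (fun y => T ((1 + lam α₀) * y) / (1 + lam α₀)) ∧
    -- (ii) the first return map of `T` to `[0,1)` coincides with `S` on interiors
    (∀ α : Fin m, ∀ x ∈ Ioo (ietLeft lam p0 α) (ietLeft lam p0 α + lam α),
      ∃ k : ℕ, 1 ≤ k ∧ T^[k] x ∈ Ico (0 : ℝ) 1 ∧
        (∀ j : ℕ, 1 ≤ j → j < k → T^[j] x ∉ Ico (0 : ℝ) 1) ∧
        T^[k] x = S x) ∧
    -- (iii) `T` is minimal on `[0, 1 + λ_{α₀})`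
    ((∀ x : ℝ,
      (∀ k : ℕ, T^[k] x ∈
        (⋃ α : Fin m, Ioo (ietLeft lam p0 α) (ietLeft lam p0 α + lam α)) ∪
          Ioo (1 : ℝ) (1 + lam α₀)) →
      Ico (0 : ℝ) (1 + lam α₀) ⊆ closure (range fun k : ℕ => T^[k] x)) ∧
    (∀ y : ℕ → ℝ, y 0 ∈ Ico (0 : ℝ) (1 + lam α₀) →
      (∀ k : ℕ, y (k + 1) ∈
        ((⋃ α : Fin m, Ioo (ietLeft lam p0 α) (ietLeft lam p0 α + lam α)) ∪
          Ioo (1 : ℝ) (1 + lam α₀)) ∧ T (y (k + 1)) = y k) →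
      Ico (0 : ℝ) (1 + lam α₀) ⊆ closure (range y))) := by

  refine ⟨isFIETon_rescaled hS hα₀ hT₁ hT₂ hT₃, ?_, forward_dense hS hmin hα₀ hT₁ hT₂ hT₃,
    fun y _ hy => backward_dense hS hmin hα₀ hT₁ hT₂ hT₃ y hy⟩
  intro α x hx
  have hmem := hS.mem_Ioo hx
  by_cases hα : α = α₀
  · subst hα
    obtain ⟨h1, h2⟩ := two_steps hS hα₀ hT₂ hT₃ hx
    refine ⟨2, by norm_num, ?_, ?_, h2⟩
    · change T (T x) ∈ _
      rw [h2]
      exact ⟨hmem.1.le, hmem.2⟩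
    · intro j hj hj2 hmemj
      obtain rfl : j = 1 := by omega
      exact absurd hmemj.2 (not_lt.mpr h1.1.le)
  · have h1 := hT₁ α hα x hx
    refine ⟨1, le_rfl, ?_, fun j hj hj1 => by omega, h1⟩
    change T x ∈ _
    rw [h1]
    exact ⟨hmem.1.le, hmem.2⟩

end IETcore
end

section
/- Let (X, μ) be a probability space, (Δ^{(l)})_{l ∈ ℕ} a countable partition of X (up to a null set) into measurable sets of positive measure, n ≥ 1 an integer, r : ℕ → [0,∞), and suppose there is K ≥ 1 with K⁻¹ e^{−n r_l} ≤ μ(Δ^{(l)}) ≤ K e^{−n r_l} for all l, and that Σ_l μ(Δ^{(l)}) e^{σ r_l} < ∞ for some σ ∈ (0, n). Then the partition is fast decaying: there exist C₁ > 0 and α₁ > 0 such that Σ_{l : μ(Δ^{(l)}) ≤ ε} μ(Δ^{(l)}) ≤ C₁ ε^{α₁} for all 0 < ε < 1. -/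
/-!
A Chebyshev-type argument. On a cell with `μ (Δ l) ≤ ε`, the lower bound
`K⁻¹ e^{-n r l} ≤ μ (Δ l)` forces `e^{-n r l} ≤ K ε`, hence `1 ≤ (K ε)^α e^{σ r l}` with
`α = σ / n`. Multiplying by `μ (Δ l)` and summing bounds the mass of the small cells by
`(K ε)^α` times the exponential moment `∑ μ (Δ l) e^{σ r l}`.
-/

open MeasureTheory Set
open scoped ENNReal

/-- **Exponential tails imply fast decay.**  Let `(X, μ)` be a probability space and
`(Δ l)` a countable partition (mod null sets) into sets of positive measure.  Suppose
`μ (Δ l)` is comparable, with uniform constant `K`, to `e^{−n r l}` for a locally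
constant roof `r`, and that `Σ_l μ (Δ l) e^{σ r l} < ∞` for some `0 < σ < n`.  Then the
partition is fast decaying: there are `C₁ > 0` and `α₁ > 0` with
`Σ_{l : μ(Δ l) ≤ ε} μ(Δ l) ≤ C₁ ε^{α₁}` for all `0 < ε < 1`. -/
theorem exponential_tails_imply_fast_decay
    (X : Type*) [MeasurableSpace X] (μ : Measure X) [IsProbabilityMeasure μ]
    (Δ : ℕ → Set X) (hmeas : ∀ l, MeasurableSet (Δ l))
    (hpos : ∀ l, 0 < μ (Δ l))
    (hdisj : Pairwise (Function.onFun Disjoint Δ))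
    (hcover : μ (⋃ l, Δ l)ᶜ = 0)
    (n : ℕ) (hn : 1 ≤ n) (r : ℕ → ℝ) (hr : ∀ l, 0 ≤ r l)
    (K : ℝ) (hK : 1 ≤ K)
    (hlow : ∀ l, ENNReal.ofReal (K⁻¹ * Real.exp (-(n * r l))) ≤ μ (Δ l))
    (hupp : ∀ l, μ (Δ l) ≤ ENNReal.ofReal (K * Real.exp (-(n * r l))))
    (σ : ℝ) (hσ0 : 0 < σ) (hσn : σ < n)
    (htail : ∑' l, μ (Δ l) * ENNReal.ofReal (Real.exp (σ * r l)) < ⊤) :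
    ∃ C₁ : ℝ, 0 < C₁ ∧ ∃ α₁ : ℝ, 0 < α₁ ∧
      ∀ ε : ℝ, 0 < ε → ε < 1 →
        (∑' l, if μ (Δ l) ≤ ENNReal.ofReal ε then μ (Δ l) else 0)
          ≤ ENNReal.ofReal (C₁ * ε ^ α₁) := by
  have hn0 : (0 : ℝ) < n := by exact_mod_cast hn
  have hK0 : 0 < K := by linarith
  set S := ∑' l, μ (Δ l) * ENNReal.ofReal (Real.exp (σ * r l)) with hS
  -- The summand `1` only serves to make the constant visibly positive.
  refine ⟨K ^ (σ / n) * (S.toReal + 1), by positivity, σ / n, by positivity, ?_⟩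
  intro ε hε _
  have key : ∀ l, (if μ (Δ l) ≤ ENNReal.ofReal ε then μ (Δ l) else 0) ≤
      ENNReal.ofReal ((K * ε) ^ (σ / n)) *
        (μ (Δ l) * ENNReal.ofReal (Real.exp (σ * r l))) := by
    intro l
    split_ifs with h
    · have h1 : K⁻¹ * Real.exp (-(n * r l)) ≤ ε :=
        (ENNReal.ofReal_le_ofReal_iff hε.le).1 ((hlow l).trans h)
      have h2 : Real.exp (-(n * r l)) ≤ K * ε := (inv_mul_le_iff₀ hK0).1 h1
      have h3 : Real.exp (-(σ * r l)) ≤ (K * ε) ^ (σ / n) := by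
        have h4 := Real.rpow_le_rpow (Real.exp_pos _).le h2 (by positivity : 0 ≤ σ / n)
        rw [← Real.exp_mul] at h4
        convert h4 using 2
        field_simp
      have h5 : 1 ≤ (K * ε) ^ (σ / n) * Real.exp (σ * r l) := by
        have h6 := mul_le_mul_of_nonneg_right h3 (Real.exp_pos (σ * r l)).le
        rwa [← Real.exp_add, neg_add_cancel, Real.exp_zero] at h6
      calc μ (Δ l) = μ (Δ l) * 1 := (mul_one _).symm
        _ ≤ μ (Δ l) * ENNReal.ofReal ((K * ε) ^ (σ / n) * Real.exp (σ * r l)) := by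
            gcongr
            exact ENNReal.one_le_ofReal.2 h5
        _ = _ := by
            rw [ENNReal.ofReal_mul (by positivity)]
            ring
    · exact zero_le
  calc (∑' l, if μ (Δ l) ≤ ENNReal.ofReal ε then μ (Δ l) else 0)
      ≤ ENNReal.ofReal ((K * ε) ^ (σ / n)) * S := by
        rw [hS, ← ENNReal.tsum_mul_left]
        exact ENNReal.tsum_le_tsum key
    _ = ENNReal.ofReal ((K * ε) ^ (σ / n) * S.toReal) := by
        rw [ENNReal.ofReal_mul (by positivity), ENNReal.ofReal_toReal htail.ne]
    _ ≤ _ := by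
        apply ENNReal.ofReal_le_ofReal
        rw [Real.mul_rpow hK0.le hε.le]
        have : 0 ≤ K ^ (σ / n) * ε ^ (σ / n) := by positivity
        linarith
end

section
/- Let C be an n × n matrix with positive integer entries and determinant 1, and let Δ = {λ ∈ ℝⁿ : λ_α > 0, Σ_α λ_α = 1} be the open standard simplex. Then the map Q′(λ) = Cλ/‖Cλ‖₁ (‖·‖₁ the sum of coordinates) maps Δ injectively into Δ, its Jacobian with respect to (n−1)-dimensional Lebesgue measure on Δ equals J_{Q′}(λ) = 1/‖Cλ‖₁ⁿ, and it satisfies (max_α C_α)^{−n} ≤ J_{Q′}(λ) ≤ (min_α C_α)^{−n} ≤ n^{−n} for all λ ∈ Δ, where C_α = Σ_β c_{βα} is the α-th column sum of C. -/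
/-!
The chart `x ↦ (x, 1 - ∑ xᵢ)` identifies `ℝᵐ`, `m = n - 1`, with the hyperplane `∑ vᵢ = 1` containing
the simplex. Pulled back along it, Hausdorff measure is translation invariant and locally finite,
hence a constant multiple of Lebesgue measure (`exists_chartMeasure_eq`). The change of variables
formula on `ℝᵐ` therefore reduces the Jacobian claim to the derivative `D` of the projectivization
in the chart.

Its determinant (`det_jacobianMatrix`) comes from comparing frames of `ℝⁿ`: with `s = ‖C v‖₁`, the
matrix `C` sends the frame made of the tangent vectors `eⱼ - e_last` and `v` to the frame made of
the same tangent vectors and `C v / s`, through a block triangular matrix with diagonal blocks `s D`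
and `s`. Both frames and `C` have determinant `1`, so `det D = s ^ (-n)`.

Injectivity holds because `C` is invertible and a ray meets the simplex at most once. The bounds
hold because `‖C v‖₁` is the average of the column sums of `C` with weights `v`, and each column sum
is at least `n`.
-/

open MeasureTheory Set
open scoped ENNReal

/-- The open standard simplex in `ℝⁿ`. -/
def openSimplex (n : ℕ) : Set (Fin n → ℝ) :=
  {v | (∀ i, 0 < v i) ∧ ∑ i, v i = 1}

/-! ### The affine chart of the simplex -/

/-- The affine chart `x ↦ (x, 1 - ∑ xᵢ)` of the hyperplane `∑ vᵢ = 1`; its inverse forgets the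
last coordinate. -/
def simplexChart (m : ℕ) (x : Fin m → ℝ) : Fin (m + 1) → ℝ :=
  Fin.snoc (α := fun _ => ℝ) x (1 - ∑ i, x i)

lemma simplexChart_castSucc {m : ℕ} (x : Fin m → ℝ) (i : Fin m) :
    simplexChart m x i.castSucc = x i := by simp [simplexChart]

lemma simplexChart_last {m : ℕ} (x : Fin m → ℝ) :
    simplexChart m x (Fin.last m) = 1 - ∑ i, x i := by simp [simplexChart]

lemma sum_simplexChart {m : ℕ} (x : Fin m → ℝ) : ∑ i, simplexChart m x i = 1 := by
  simp [Fin.sum_univ_castSucc, simplexChart_castSucc, simplexChart_last]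

lemma simplexChart_of_sum_eq_one {m : ℕ} {v : Fin (m + 1) → ℝ} (hv : ∑ i, v i = 1) :
    simplexChart m (fun i => v i.castSucc) = v := by
  ext i
  refine Fin.lastCases ?_ (fun i => ?_) i
  · rw [simplexChart_last, ← hv, Fin.sum_univ_castSucc]; ring
  · rw [simplexChart_castSucc]

lemma simplexChart_injective (m : ℕ) : Function.Injective (simplexChart m) := by
  intro x y h
  ext i
  simpa [simplexChart_castSucc] using congrFun h i.castSucc

lemma range_simplexChart (m : ℕ) : range (simplexChart m) = {v | ∑ i, v i = 1} := by
  ext v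
  exact ⟨by rintro ⟨x, rfl⟩; exact sum_simplexChart x, fun hv => ⟨_, simplexChart_of_sum_eq_one hv⟩⟩

lemma continuous_simplexChart (m : ℕ) : Continuous (simplexChart m) := by
  refine continuous_pi fun i => ?_
  refine Fin.lastCases ?_ (fun i => ?_) i
  · simp only [simplexChart_last]; fun_prop
  · simp only [simplexChart_castSucc]; fun_prop

lemma measurableEmbedding_simplexChart (m : ℕ) : MeasurableEmbedding (simplexChart m) :=
  (continuous_simplexChart m).measurableEmbedding (simplexChart_injective m)

lemma lipschitzWith_simplexChart (m : ℕ) : LipschitzWith (m + 1) (simplexChart m) := by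
  refine LipschitzWith.of_dist_le_mul fun x y => ?_
  have hnn : 0 ≤ dist x y := dist_nonneg
  refine (dist_pi_le_iff (by positivity)).2 fun i => ?_
  push_cast
  refine Fin.lastCases ?_ (fun i => ?_) i
  · simp only [simplexChart_last]
    rw [dist_sub_left]
    refine (dist_sum_sum_le_of_le _ (fun i _ => dist_le_pi_dist x y i)).trans ?_
    simp
    nlinarith
  · simp only [simplexChart_castSucc]
    have := dist_le_pi_dist x y i
    have hm : (0 : ℝ) ≤ m := m.cast_nonneg
    nlinarith

/-! ### Hausdorff measure in the chart -/

/-- The `m`-dimensional Hausdorff measure of the hyperplane `∑ vᵢ = 1`, read in the chart. -/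
noncomputable def chartMeasure (m : ℕ) : Measure (Fin m → ℝ) :=
  (μH[(m : ℝ)] : Measure (Fin (m + 1) → ℝ)).comap (simplexChart m)

lemma chartMeasure_apply (m : ℕ) (s : Set (Fin m → ℝ)) :
    chartMeasure m s = μH[(m : ℝ)] (simplexChart m '' s) :=
  (measurableEmbedding_simplexChart m).comap_apply _ _

lemma simplexChart_add {m : ℕ} (a x : Fin m → ℝ) :
    simplexChart m (a + x) = (simplexChart m a - simplexChart m 0) + simplexChart m x := by
  ext i
  refine Fin.lastCases ?_ (fun i => ?_) i
  · simp [simplexChart_last, Finset.sum_add_distrib]; ring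
  · simp [simplexChart_castSucc]

instance (m : ℕ) : (chartMeasure m).IsAddLeftInvariant := by
  refine ⟨fun a => ?_⟩
  ext s hs
  rw [Measure.map_apply (measurable_const_add a) hs, chartMeasure_apply, chartMeasure_apply]
  set b := simplexChart m a - simplexChart m 0
  have : simplexChart m '' s = (fun v => b + v) '' (simplexChart m '' ((fun x => a + x) ⁻¹' s)) := by
    rw [← image_comp]
    conv_lhs => rw [← image_preimage_eq s (add_left_surjective a), ← image_comp]
    refine image_congr fun x _ => ?_
    exact simplexChart_add a x
  rw [this, image_add_left, measure_preimage_add]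

instance (m : ℕ) : IsFiniteMeasureOnCompacts (chartMeasure m) := by
  refine ⟨fun K hK => ?_⟩
  rw [chartMeasure_apply]
  refine ((lipschitzWith_simplexChart m).hausdorffMeasure_image_le m.cast_nonneg K).trans_lt ?_
  have : (μH[(m : ℝ)] : Measure (Fin m → ℝ)) = volume := by
    simpa using hausdorffMeasure_pi_real (ι := Fin m)
  rw [this]
  exact ENNReal.mul_lt_top (by simp) hK.measure_lt_top

/-- In the chart, Hausdorff measure is a multiple of Lebesgue measure, since it is translation
invariant and finite on compact sets. The constant, which depends on the choice of the sup metric,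
cancels in the change of variables. -/
lemma exists_chartMeasure_eq (m : ℕ) :
    ∃ c : NNReal, chartMeasure m = c • (volume : Measure (Fin m → ℝ)) :=
  ⟨_, Measure.isAddLeftInvariant_eq_smul _ _⟩

/-! ### The Jacobian determinant -/

/-- The restriction of `C` to vectors of coordinate sum zero, in the basis `eⱼ - e_last`. This is
the linear part of `x ↦ C (simplexChart m x)`. -/
def tangentMatrix {m : ℕ} (C : Matrix (Fin (m + 1)) (Fin (m + 1)) ℝ) :
    Matrix (Fin (m + 1)) (Fin m) ℝ :=
  Matrix.of fun i j => C i j.castSucc - C i (Fin.last m)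

lemma mulVec_simplexChart {m : ℕ} (C : Matrix (Fin (m + 1)) (Fin (m + 1)) ℝ) (x : Fin m → ℝ)
    (i : Fin (m + 1)) :
    C.mulVec (simplexChart m x) i = C i (Fin.last m) + ∑ j, tangentMatrix C i j * x j := by
  simp only [Matrix.mulVec, dotProduct, Fin.sum_univ_castSucc, simplexChart_castSucc,
    simplexChart_last, tangentMatrix, Matrix.of_apply, sub_mul, Finset.sum_sub_distrib,
    ← Finset.mul_sum]
  ring

/-- The matrix of the derivative of `chartMap C` at a point with `w = C (simplexChart m x)`, as
given by the quotient rule. -/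
noncomputable def jacobianMatrix {m : ℕ} (C : Matrix (Fin (m + 1)) (Fin (m + 1)) ℝ)
    (w : Fin (m + 1) → ℝ) : Matrix (Fin m) (Fin m) ℝ :=
  Matrix.of fun i j => tangentMatrix C i.castSucc j / ∑ k, w k
    - w i.castSucc * (∑ k, tangentMatrix C k j) / (∑ k, w k) ^ 2

/-- The matrix whose columns are the tangent vectors `eⱼ - e_last` followed by `u`, with the last
coordinate split off so that block determinants apply. -/
def frameMatrix {m : ℕ} (u : Fin (m + 1) → ℝ) : Matrix (Fin m ⊕ Fin 1) (Fin m ⊕ Fin 1) ℝ :=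
  Matrix.fromBlocks 1 (Matrix.of fun i _ => u i.castSucc) (Matrix.of fun _ _ => -1)
    (Matrix.of fun _ _ => u (Fin.last m))

lemma det_frameMatrix {m : ℕ} {u : Fin (m + 1) → ℝ} (hu : ∑ i, u i = 1) :
    (frameMatrix u).det = 1 := by
  rw [frameMatrix, Matrix.det_fromBlocks_one₁₁, Matrix.det_unique]
  rw [Fin.sum_univ_castSucc] at hu
  simp [Matrix.mul_apply]
  linarith

/-- Writing `w = C v`, `s = ∑ wₖ`, `D` for the Jacobian matrix and `E u` for `frameMatrix u`, one
has `C * E v = E (w / s) * [s D, 0; *, s]`. Both frames have determinant `1`, so taking determinants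
gives `1 = s ^ m * det D * s`. -/
lemma det_jacobianMatrix {m : ℕ} {C : Matrix (Fin (m + 1)) (Fin (m + 1)) ℝ} (hC : C.det = 1)
    {v : Fin (m + 1) → ℝ} (hv : ∑ i, v i = 1) (hs : ∑ k, C.mulVec v k ≠ 0) :
    (jacobianMatrix C (C.mulVec v)).det = ((∑ k, C.mulVec v k) ^ (m + 1))⁻¹ := by
  set w := C.mulVec v with hw
  set s := ∑ k, w k with hsdef
  have hsplit : s = ∑ i : Fin m, w i.castSucc + w (Fin.last m) := Fin.sum_univ_castSucc _
  have key : C.submatrix finSumFinEquiv finSumFinEquiv * frameMatrix v =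
      frameMatrix (fun i => w i / s) *
        Matrix.fromBlocks (s • jacobianMatrix C w) 0
          (Matrix.of fun _ j => ∑ k, tangentMatrix C k j) (Matrix.of fun _ _ => s) := by
    ext i j
    have hcast : ∀ k : Fin m, finSumFinEquiv (Sum.inl k : Fin m ⊕ Fin 1) = k.castSucc :=
      fun _ => rfl
    have hlast : ∀ k : Fin 1, finSumFinEquiv (Sum.inr k : Fin m ⊕ Fin 1) = Fin.last m := by
      intro k; fin_cases k; rfl
    have hwk : ∀ i, w i = ∑ k : Fin m, C i k.castSucc * v k.castSucc
        + C i (Fin.last m) * v (Fin.last m) := fun i => by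
      rw [hw, Matrix.mulVec, dotProduct, Fin.sum_univ_castSucc]
    rw [Matrix.mul_apply, Matrix.mul_apply]
    rcases i with i | i <;> rcases j with j | j <;>
      simp only [Fintype.sum_sum_type, frameMatrix, Matrix.submatrix_apply, hcast, hlast,
        Matrix.fromBlocks_apply₁₁, Matrix.fromBlocks_apply₁₂, Matrix.fromBlocks_apply₂₁,
        Matrix.fromBlocks_apply₂₂, Matrix.of_apply, Matrix.smul_apply, Matrix.one_apply,
        jacobianMatrix, Finset.univ_unique, Finset.sum_singleton, smul_eq_mul, mul_ite, ite_mul,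
        mul_one, mul_zero, one_mul, zero_mul, Finset.sum_ite_eq, Finset.sum_ite_eq',
        Finset.mem_univ, if_true, Matrix.zero_apply, ← hsdef, Finset.sum_const_zero, zero_add,
        ← hwk]
    · simp only [tangentMatrix, Matrix.of_apply]
      field_simp
      ring
    · field_simp
    · rw [← Finset.mul_sum, ← Finset.mul_sum, Finset.sum_sub_distrib, ← Finset.sum_div,
        ← Finset.sum_div, ← Finset.sum_mul]
      have h1 : ∑ i : Fin m, w i.castSucc = s - w (Fin.last m) := by linarith
      rw [h1, Fin.sum_univ_castSucc (fun k => tangentMatrix C k j)]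
      simp only [tangentMatrix, Matrix.of_apply]
      field_simp
      ring
    · field_simp
  have hu : ∑ i, w i / s = 1 := by rw [← Finset.sum_div, ← hsdef, div_self hs]
  have := congrArg Matrix.det key
  rw [Matrix.det_mul, Matrix.det_mul, det_frameMatrix hv, det_frameMatrix hu,
    Matrix.det_submatrix_equiv_self, hC, Matrix.det_fromBlocks_zero₁₂, Matrix.det_smul,
    Matrix.det_unique (n := Fin 1), Fintype.card_fin, Matrix.of_apply] at this
  refine eq_inv_of_mul_eq_one_left ?_
  rw [pow_succ]
  linarith

/-- The projectivization `v ↦ C v / ∑ (C v)ⱼ`, read in the chart. -/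
noncomputable def chartMap {m : ℕ} (C : Matrix (Fin (m + 1)) (Fin (m + 1)) ℝ) (x : Fin m → ℝ) :
    Fin m → ℝ :=
  fun i => C.mulVec (simplexChart m x) i.castSucc / ∑ j, C.mulVec (simplexChart m x) j

lemma hasFDerivAt_chartMap {m : ℕ} (C : Matrix (Fin (m + 1)) (Fin (m + 1)) ℝ) (x : Fin m → ℝ)
    (hs : ∑ k, C.mulVec (simplexChart m x) k ≠ 0) :
    HasFDerivAt (chartMap C)
      (Matrix.toLin' (jacobianMatrix C (C.mulVec (simplexChart m x)))).toContinuousLinearMap x := by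
  have hw : ∀ i, HasFDerivAt (fun x => C.mulVec (simplexChart m x) i)
      (∑ j, tangentMatrix C i j • (ContinuousLinearMap.proj j : (Fin m → ℝ) →L[ℝ] ℝ)) x := by
    intro i
    simp only [mulVec_simplexChart]
    refine HasFDerivAt.const_add _ (HasFDerivAt.fun_sum fun j _ => ?_)
    exact (hasFDerivAt_apply j x).const_mul _
  have hsum := HasFDerivAt.fun_sum (u := Finset.univ) fun k _ => hw k
  refine hasFDerivAt_pi'.2 fun i => ?_
  have h := (hw i.castSucc).mul ((hasDerivAt_inv hs).comp_hasFDerivAt x hsum)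
  refine (h.congr_fderiv ?_).congr_of_eventuallyEq ?_
  · ext y
    simp only [add_apply, smul_apply,
      sum_apply, ContinuousLinearMap.proj_apply, smul_eq_mul,
      ContinuousLinearMap.comp_apply, LinearMap.coe_toContinuousLinearMap', Matrix.toLin'_apply,
      Function.comp_apply]
    generalize C.mulVec (simplexChart m x) = w
    rw [Finset.sum_comm, Matrix.mulVec, dotProduct, Finset.mul_sum, Finset.mul_sum,
      Finset.mul_sum, ← Finset.sum_add_distrib]
    refine Finset.sum_congr rfl fun j _ => ?_
    simp only [← Finset.sum_mul, jacobianMatrix, Matrix.of_apply, div_eq_mul_inv]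
    ring
  · exact Filter.Eventually.of_forall fun y => div_eq_mul_inv _ _

/-! ### The projectivization on the simplex -/

lemma mulVec_pos {n : ℕ} {C : Matrix (Fin n) (Fin n) ℝ} (hpos : ∀ i j, 0 < C i j)
    {v : Fin n → ℝ} (hv : v ∈ openSimplex n) (i : Fin n) : 0 < C.mulVec v i := by
  have : Nonempty (Fin n) := ⟨i⟩
  exact Finset.sum_pos (fun j _ => mul_pos (hpos i j) (hv.1 j)) Finset.univ_nonempty

lemma sum_mulVec_pos {n : ℕ} {C : Matrix (Fin n) (Fin n) ℝ} (hpos : ∀ i j, 0 < C i j)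
    {v : Fin n → ℝ} (hv : v ∈ openSimplex n) : 0 < ∑ i, C.mulVec v i := by
  have : Nonempty (Fin n) := by
    by_contra h
    rw [not_nonempty_iff] at h
    simpa using hv.2
  exact Finset.sum_pos (fun i _ => mulVec_pos hpos hv i) Finset.univ_nonempty

/-- The coordinate sum of `C v` is the combination of the column sums of `C` with weights `v`. -/
lemma sum_mulVec_eq {n : ℕ} (C : Matrix (Fin n) (Fin n) ℝ) (v : Fin n → ℝ) :
    ∑ i, C.mulVec v i = ∑ a, (∑ b, C b a) * v a := by
  simp only [Matrix.mulVec, dotProduct, Finset.sum_mul]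
  exact Finset.sum_comm

lemma injOn_projectivization {n : ℕ} {C : Matrix (Fin n) (Fin n) ℝ} (hpos : ∀ i j, 0 < C i j)
    (hdet : C.det = 1) :
    InjOn (fun v i => C.mulVec v i / ∑ j, C.mulVec v j) (openSimplex n) := by
  intro u hu v hv h
  have hsu := sum_mulVec_pos hpos hu
  have hsv := sum_mulVec_pos hpos hv
  set s := ∑ j, C.mulVec u j
  set t := ∑ j, C.mulVec v j
  have hC : C.mulVec u = C.mulVec ((s / t) • v) := by
    ext i
    have hi : C.mulVec u i / s = C.mulVec v i / t := congrFun h i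
    rw [Matrix.mulVec_smul, Pi.smul_apply, smul_eq_mul]
    field_simp at hi ⊢
    linarith
  have huv : u = (s / t) • v :=
    Matrix.mulVec_injective_of_isUnit ((Matrix.isUnit_iff_isUnit_det C).2 (by simp [hdet])) hC
  have hst : s / t = 1 := by
    have := hu.2
    rw [huv] at this
    simpa [← Finset.mul_sum, hv.2] using this
  rw [huv, hst, one_smul]

/-- The change of variables formula for the chart map, transported back to the hyperplane. -/
lemma hausdorffMeasure_image_projectivization {m : ℕ}
    {C : Matrix (Fin (m + 1)) (Fin (m + 1)) ℝ} (hpos : ∀ i j, 0 < C i j) (hdet : C.det = 1)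
    {A : Set (Fin (m + 1) → ℝ)} (hA : A ⊆ openSimplex (m + 1)) (hAm : MeasurableSet A) :
    μH[(m : ℝ)] ((fun v i => C.mulVec v i / ∑ j, C.mulVec v j) '' A)
      = ∫⁻ v in A, ENNReal.ofReal (((∑ j, C.mulVec v j) ^ (m + 1))⁻¹) ∂μH[(m : ℝ)] := by
  set B := simplexChart m ⁻¹' A with hB
  have hrange : A ⊆ range (simplexChart m) := by
    rw [range_simplexChart]
    exact fun v hv => (hA hv).2
  have hBm : MeasurableSet B := (continuous_simplexChart m).measurable hAm
  have hBA : simplexChart m '' B = A := image_preimage_eq_of_subset hrange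
  have hspos : ∀ x ∈ B, 0 < ∑ j, C.mulVec (simplexChart m x) j :=
    fun x hx => sum_mulVec_pos hpos (hA hx)
  have hconj : ∀ x ∈ B, (fun i => C.mulVec (simplexChart m x) i /
      ∑ j, C.mulVec (simplexChart m x) j) = simplexChart m (chartMap C x) := by
    intro x hx
    refine (simplexChart_of_sum_eq_one ?_).symm
    rw [← Finset.sum_div, div_self (hspos x hx).ne']
  have himage : (fun v i => C.mulVec v i / ∑ j, C.mulVec v j) '' A
      = simplexChart m '' (chartMap C '' B) := by
    rw [← hBA, ← image_comp, ← image_comp]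
    exact image_congr hconj
  have hinj : InjOn (chartMap C) B := by
    intro x hx y hy hxy
    refine simplexChart_injective m (injOn_projectivization hpos hdet (hA hx) (hA hy) ?_)
    change (fun i => C.mulVec (simplexChart m x) i / ∑ j, C.mulVec (simplexChart m x) j) =
      fun i => C.mulVec (simplexChart m y) i / ∑ j, C.mulVec (simplexChart m y) j
    rw [hconj x hx, hconj y hy, hxy]
  obtain ⟨c, hc⟩ := exists_chartMeasure_eq m
  have hvol := lintegral_abs_det_fderiv_eq_addHaar_image volume hBm
    (fun x hx => (hasFDerivAt_chartMap C x (hspos x hx).ne').hasFDerivWithinAt) hinj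
  have hleft : μH[(m : ℝ)] ((fun v i => C.mulVec v i / ∑ j, C.mulVec v j) '' A)
      = ∫⁻ x in B, ENNReal.ofReal (((∑ j, C.mulVec (simplexChart m x) j) ^ (m + 1))⁻¹)
          ∂(chartMeasure m) := by
    rw [himage, ← chartMeasure_apply, hc, Measure.restrict_smul, lintegral_smul_measure,
      Measure.smul_apply, ← hvol]
    congr 1
    refine setLIntegral_congr_fun hBm fun x hx => ?_
    have hs := hspos x hx
    simp only [ContinuousLinearMap.det, LinearMap.coe_toContinuousLinearMap, LinearMap.det_toLin']
    rw [det_jacobianMatrix hdet (sum_simplexChart x) hs.ne', abs_of_pos (by positivity)]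
  rw [hleft]
  have hmap := (measurableEmbedding_simplexChart m).map_comap
    (μH[(m : ℝ)] : Measure (Fin (m + 1) → ℝ))
  have hres : (μH[(m : ℝ)] : Measure (Fin (m + 1) → ℝ)).restrict A
      = ((chartMeasure m).restrict B).map (simplexChart m) := by
    rw [hB, ← (measurableEmbedding_simplexChart m).restrict_map, chartMeasure, hmap,
      Measure.restrict_restrict hAm, inter_eq_left.2 hrange]
  rw [hres, (measurableEmbedding_simplexChart m).lintegral_map]

/-- **Veech's Jacobian estimate / uniform contraction.**  Let `C` be an `n × n` matrix
with positive integer entries and determinant `1`, and let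
`Q′(λ) = Cλ / ‖Cλ‖₁` be its projectivization.  Then `Q′` maps the open standard
simplex `Δ` injectively into itself, its Jacobian with respect to the
`(n−1)`-dimensional Lebesgue (Hausdorff) measure on `Δ` equals `‖Cλ‖₁^{−n}`, and
`(max_α C_α)^{−n} ≤ ‖Cλ‖₁^{−n} ≤ (min_α C_α)^{−n} ≤ n^{−n}` on `Δ`, where
`C_α = Σ_β c_{βα}` is the `α`-th column sum. -/
theorem projectivization_jacobian_bounds (n : ℕ) (hn : 2 ≤ n)
    (C : Matrix (Fin n) (Fin n) ℝ)
    (hint : ∀ i j, ∃ k : ℕ, 0 < k ∧ C i j = (k : ℝ))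
    (hdet : C.det = 1) :
    Set.MapsTo (fun v i => C.mulVec v i / ∑ j, C.mulVec v j) (openSimplex n)
        (openSimplex n) ∧
    Set.InjOn (fun v i => C.mulVec v i / ∑ j, C.mulVec v j) (openSimplex n) ∧
    (∀ A : Set (Fin n → ℝ), A ⊆ openSimplex n → MeasurableSet A →
      μH[(n : ℝ) - 1] ((fun v i => C.mulVec v i / ∑ j, C.mulVec v j) '' A)
        = ∫⁻ v in A, ENNReal.ofReal (((∑ j, C.mulVec v j) ^ n)⁻¹)
            ∂(μH[(n : ℝ) - 1])) ∧
    (∀ v ∈ openSimplex n,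
      ((Finset.univ.sup' (Finset.univ_nonempty_iff.mpr ⟨⟨0, by omega⟩⟩)
          (fun α => ∑ β, C β α)) ^ n)⁻¹ ≤ ((∑ j, C.mulVec v j) ^ n)⁻¹ ∧
      ((∑ j, C.mulVec v j) ^ n)⁻¹ ≤
        ((Finset.univ.inf' (Finset.univ_nonempty_iff.mpr ⟨⟨0, by omega⟩⟩)
          (fun α => ∑ β, C β α)) ^ n)⁻¹ ∧
      ((Finset.univ.inf' (Finset.univ_nonempty_iff.mpr ⟨⟨0, by omega⟩⟩)
          (fun α => ∑ β, C β α)) ^ n)⁻¹ ≤ ((n : ℝ) ^ n)⁻¹) := by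
  have hone : ∀ i j, 1 ≤ C i j := by
    intro i j
    obtain ⟨k, hk, h⟩ := hint i j
    rw [h]
    exact_mod_cast hk
  have hpos : ∀ i j, 0 < C i j := fun i j => one_pos.trans_le (hone i j)
  refine ⟨fun v hv => ?_, injOn_projectivization hpos hdet, fun A hA hAm => ?_, fun v hv => ?_⟩
  · have hs := sum_mulVec_pos hpos hv
    refine ⟨fun i => div_pos (mulVec_pos hpos hv i) hs, ?_⟩
    rw [← Finset.sum_div, div_self hs.ne']
  · obtain ⟨m, rfl⟩ : ∃ m, n = m + 1 := ⟨n - 1, by omega⟩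
    rw [Nat.cast_succ, add_sub_cancel_right]
    exact hausdorffMeasure_image_projectivization hpos hdet hA hAm
  · have hs := sum_mulVec_pos hpos hv
    have hne : (Finset.univ : Finset (Fin n)).Nonempty :=
      Finset.univ_nonempty_iff.mpr ⟨⟨0, by omega⟩⟩
    have hn0 : (0 : ℝ) < n := by exact_mod_cast (by omega : 0 < n)
    have hinf : (n : ℝ) ≤ Finset.univ.inf' hne (fun α => ∑ β, C β α) := by
      refine Finset.le_inf' _ _ fun a _ => ?_
      simpa using Finset.sum_le_sum fun b (_ : b ∈ Finset.univ) => hone b a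
    -- `‖C v‖₁` is an average of the column sums, as the weights `v` add up to `1`.
    have hlow : Finset.univ.inf' hne (fun α => ∑ β, C β α) ≤ ∑ j, C.mulVec v j := by
      rw [sum_mulVec_eq, ← mul_one (Finset.univ.inf' _ _), ← hv.2, Finset.mul_sum]
      exact Finset.sum_le_sum fun a ha =>
        mul_le_mul_of_nonneg_right (Finset.inf'_le _ ha) (hv.1 a).le
    have hup : ∑ j, C.mulVec v j ≤ Finset.univ.sup' hne (fun α => ∑ β, C β α) := by
      rw [sum_mulVec_eq, ← mul_one (Finset.univ.sup' _ _), ← hv.2, Finset.mul_sum]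
      exact Finset.sum_le_sum fun a ha =>
        mul_le_mul_of_nonneg_right (Finset.le_sup' (fun α => ∑ β, C β α) ha) (hv.1 a).le
    have hinf0 := hn0.trans_le hinf
    refine ⟨?_, ?_, ?_⟩
    · exact inv_anti₀ (pow_pos hs n) (pow_le_pow_left₀ hs.le hup n)
    · exact inv_anti₀ (pow_pos hinf0 n) (pow_le_pow_left₀ hinf0.le hlow n)
    · exact inv_anti₀ (pow_pos hn0 n) (pow_le_pow_left₀ hn0.le hinf n)
end

section
/- Let q ∈ ℝⁿ₊ be a vector with all coordinates positive and set Λ_q = {λ ∈ ℝⁿ₊ : ⟨λ, q⟩ < 1}. Then: (i) Leb(Λ_q) = 1/(n! q_1 ⋯ q_n); (ii) for every matrix B with nonnegative integer entries and determinant ±1 and every Borel set A ⊆ ℝⁿ₊ with ℝ₊ A = A, one has Leb(Bᵀ A ∩ Λ_q) = Leb(A ∩ Λ_{Bq}); and in particular (iii) Leb(Bᵀ ℝⁿ₊ ∩ Λ_q) = 1/(n! (Bq)_1 ⋯ (Bq)_n). -/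
/-!
The set `Λ_q` is an open simplex. Its volume is found by slicing in the first coordinate: the slice
of `{v > 0, ⟨v, q⟩ < r}` at height `x` is a simplex of the same kind, one dimension lower and with
`r` replaced by `r - x q₀`, so keeping the size `r` as a parameter lets an induction run
(`volume_scaledSimplex`); the induction step is the integral of `(r - x q₀)ⁿ` over `(0, r / q₀)`.

For the statement about `B`, the adjunction `⟨Bᵀ v, q⟩ = ⟨v, B q⟩`, together with the fact that `Bᵀ`
maps the positive cone into itself (no column of `B` vanishes), shows that
`Bᵀ A ∩ Λ_q = Bᵀ (A ∩ Λ_{Bq})` for `A` inside the cone. Since `|det Bᵀ| = 1`, the map `Bᵀ` preserves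
Lebesgue measure. The last formula is the case where `A` is the whole cone.
-/

open MeasureTheory Set
open scoped ENNReal

/-- The open positive cone `ℝⁿ₊`. -/
def posCone (n : ℕ) : Set (Fin n → ℝ) := {v | ∀ i, 0 < v i}

/-- `Λ_q = {λ ∈ ℝⁿ₊ : ⟨λ, q⟩ < 1}`. -/
def Lambda {n : ℕ} (q : Fin n → ℝ) : Set (Fin n → ℝ) :=
  {v | (∀ i, 0 < v i) ∧ ∑ i, v i * q i < 1}

/-- The simplex `{v ∈ ℝⁿ₊ : ⟨v, q⟩ < r}`, so that `Lambda q` is the case `r = 1`. -/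
def scaledSimplex {n : ℕ} (q : Fin n → ℝ) (r : ℝ) : Set (Fin n → ℝ) :=
  {v | (∀ i, 0 < v i) ∧ ∑ i, v i * q i < r}

/-- The one-variable integral in the slicing step. -/
lemma lintegral_slice (n : ℕ) {a r c : ℝ} (ha : 0 < a) (hr : 0 < r) (hc : 0 < c) :
    ∫⁻ x in Ioo 0 (r / a), ENNReal.ofReal ((r - x * a) ^ n / (n.factorial * c))
      = ENNReal.ofReal (r ^ (n + 1) / ((n + 1).factorial * (a * c))) := by
  have hra : 0 ≤ r / a := by positivity
  have hcont : Continuous fun x : ℝ => (r - x * a) ^ n / (n.factorial * c) := by fun_prop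
  rw [← ofReal_integral_eq_lintegral_ofReal]
  · congr 1
    rw [← integral_Ioc_eq_integral_Ioo, ← intervalIntegral.integral_of_le hra]
    have hderiv : ∀ x ∈ uIcc 0 (r / a), HasDerivAt
        (fun x : ℝ => -(r - x * a) ^ (n + 1) / ((n + 1).factorial * (a * c)))
        ((r - x * a) ^ n / (n.factorial * c)) x := by
      intro x _
      have h := (((((hasDerivAt_id x).mul_const a).const_sub r).pow (n + 1)).neg).div_const
        (((n + 1).factorial : ℝ) * (a * c))
      refine h.congr_deriv ?_
      have : (n.factorial : ℝ) ≠ 0 := by positivity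
      have : (n : ℝ) + 1 ≠ 0 := by positivity
      simp only [Nat.factorial_succ, Nat.cast_mul, Nat.cast_succ, Nat.add_sub_cancel, id]
      field_simp
    rw [intervalIntegral.integral_eq_sub_of_hasDerivAt hderiv (hcont.intervalIntegrable _ _)]
    have : r / a * a = r := by field_simp
    simp [this, neg_div]
  · exact (hcont.integrableOn_Icc (a := 0) (b := r / a)).mono_set Ioo_subset_Icc_self
  · refine (ae_restrict_iff' measurableSet_Ioo).2 (Filter.Eventually.of_forall fun x hx => ?_)
    have : x * a < r := (lt_div_iff₀ ha).1 hx.2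
    have : 0 < r - x * a := by linarith
    simp only [Pi.zero_apply]
    positivity

lemma volume_scaledSimplex (n : ℕ) : ∀ (q : Fin n → ℝ) (r : ℝ), (∀ i, 0 < q i) → 0 < r →
    volume (scaledSimplex q r) = ENNReal.ofReal (r ^ n / (n.factorial * ∏ i, q i)) := by
  induction n with
  | zero =>
    intro q r _ hr
    have : scaledSimplex q r = univ := by
      ext v; simp [scaledSimplex, hr]
    simp [this, volume_pi]
  | succ n ih =>
    intro q r hq hr
    set q' : Fin n → ℝ := fun i => q i.succ with hq'
    let T : Set (ℝ × (Fin n → ℝ)) := {p | 0 < p.1 ∧ p.2 ∈ scaledSimplex q' (r - p.1 * q 0)}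
    have hT : MeasurableSet T := by
      have h1 : IsOpen {p : ℝ × (Fin n → ℝ) | 0 < p.1} := isOpen_lt continuous_const continuous_fst
      have h2 : IsOpen {p : ℝ × (Fin n → ℝ) | ∀ i, 0 < p.2 i} := by
        simp only [ofPred_forall]
        exact isOpen_iInter_of_finite fun i => isOpen_lt continuous_const (by fun_prop)
      have h3 : IsOpen {p : ℝ × (Fin n → ℝ) | ∑ i, p.2 i * q' i < r - p.1 * q 0} :=
        isOpen_lt (by fun_prop) (by fun_prop)
      exact (h1.inter (h2.inter h3)).measurableSet
    have hpre : scaledSimplex q r = MeasurableEquiv.piFinSuccAbove (fun _ => ℝ) 0 ⁻¹' T := by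
      ext v
      simp [scaledSimplex, T, q', Fin.forall_fin_succ, Fin.sum_univ_succ, lt_sub_iff_add_lt',
        MeasurableEquiv.piFinSuccAbove, Fin.insertNthEquiv, Fin.tail, and_assoc]
    rw [hpre, (volume_preserving_piFinSuccAbove (fun _ : Fin (n + 1) => ℝ) 0).measure_preimage
      hT.nullMeasurableSet, Measure.volume_eq_prod, Measure.prod_apply hT, Fin.prod_univ_succ,
      ← lintegral_slice n (hq 0) hr (Finset.prod_pos fun i _ => hq (Fin.succ i)),
      ← lintegral_indicator measurableSet_Ioo]
    refine lintegral_congr fun x => ?_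
    by_cases hx : x ∈ Ioo 0 (r / q 0)
    · have hxr : x * q 0 < r := (lt_div_iff₀ (hq 0)).1 hx.2
      rw [indicator_of_mem hx, ← ih q' (r - x * q 0) (fun i => hq _) (by linarith)]
      congr 1
      ext v
      simp [T, hx.1]
    · rw [indicator_of_notMem hx]
      convert measure_empty (μ := (volume : Measure (Fin n → ℝ)))
      ext v
      simp only [mem_preimage, mem_ofPred_eq, mem_empty_iff_false, iff_false, T, scaledSimplex]
      rintro ⟨h0, hv, hs⟩
      have : 0 ≤ ∑ i, v i * q' i :=
        Finset.sum_nonneg fun i _ => (mul_pos (hv i) (hq _)).le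
      exact hx ⟨h0, (lt_div_iff₀ (hq 0)).2 (by linarith)⟩

lemma volume_Lambda {n : ℕ} {q : Fin n → ℝ} (hq : q ∈ posCone n) :
    volume (Lambda q) = ENNReal.ofReal (1 / (n.factorial * ∏ i, q i)) := by
  simpa [scaledSimplex, Lambda] using volume_scaledSimplex n q 1 hq one_pos

/-- An invertible matrix with nonnegative entries has no zero row, hence preserves the cone. -/
lemma mulVec_mem_posCone {n : ℕ} {B : Matrix (Fin n) (Fin n) ℝ} (hB : ∀ i j, 0 ≤ B i j)
    (hdet : B.det ≠ 0) {v : Fin n → ℝ} (hv : v ∈ posCone n) : B.mulVec v ∈ posCone n := by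
  intro i
  obtain ⟨j, hj⟩ : ∃ j, B i j ≠ 0 := by
    by_contra! h
    exact hdet (Matrix.det_eq_zero_of_row_eq_zero i h)
  exact Finset.sum_pos' (fun k _ => mul_nonneg (hB i k) (hv k).le)
    ⟨j, Finset.mem_univ j, mul_pos ((hB i j).lt_of_ne' hj) (hv j)⟩

lemma volume_image_inter_Lambda {n : ℕ} (q : Fin n → ℝ) {B : Matrix (Fin n) (Fin n) ℝ}
    (hB : ∀ i j, 0 ≤ B i j) (hdet : |B.det| = 1) {A : Set (Fin n → ℝ)} (hA : A ⊆ posCone n) :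
    volume (B.transpose.mulVec '' A ∩ Lambda q) = volume (A ∩ Lambda (B.mulVec q)) := by
  have hdet0 : B.transpose.det ≠ 0 := by
    rw [Matrix.det_transpose]
    intro h
    simp [h] at hdet
  have hset : B.transpose.mulVec '' A ∩ Lambda q
      = Matrix.toLin' B.transpose '' (A ∩ Lambda (B.mulVec q)) := by
    have key : ∀ v ∈ A, B.transpose.mulVec v ∈ Lambda q ↔ v ∈ Lambda (B.mulVec q) := by
      intro v hv
      have hadj : ∑ i, B.transpose.mulVec v i * q i = ∑ i, v i * B.mulVec q i := by
        change dotProduct (B.transpose.mulVec v) q = dotProduct v (B.mulVec q)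
        rw [Matrix.mulVec_transpose, Matrix.dotProduct_mulVec]
      have hpos := mulVec_mem_posCone (fun i j => hB j i) hdet0 (hA hv)
      simp only [Lambda, mem_ofPred_eq, hadj]
      exact and_congr_left fun _ => ⟨fun _ => hA hv, fun _ => hpos⟩
    ext w
    constructor
    · rintro ⟨⟨v, hv, rfl⟩, hw⟩
      exact ⟨v, ⟨hv, (key v hv).1 hw⟩, by simp⟩
    · rintro ⟨v, ⟨hv, hw⟩, rfl⟩
      exact ⟨⟨v, hv, by simp⟩, by simpa using (key v hv).2 hw⟩
  rw [hset, Measure.addHaar_image_linearMap, LinearMap.det_toLin', Matrix.det_transpose, hdet]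
  simp

/-- **Veech's volume computations (Proposition 5.4 of Veech).**  For `q ∈ ℝⁿ₊`:
(i) `Leb(Λ_q) = 1/(n! q₁⋯qₙ)`;
(ii) for every matrix `B` with nonnegative integer entries and determinant `±1` and
every positively invariant Borel set `A ⊆ ℝⁿ₊`, `Leb(Bᵀ A ∩ Λ_q) = Leb(A ∩ Λ_{Bq})`;
(iii) in particular `Leb(Bᵀ ℝⁿ₊ ∩ Λ_q) = 1/(n! (Bq)₁⋯(Bq)ₙ)`. -/
theorem lebesgue_volume_of_Lambda (n : ℕ) (hn : 1 ≤ n)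
    (q : Fin n → ℝ) (hq : q ∈ posCone n)
    (B : Matrix (Fin n) (Fin n) ℝ)
    (hint : ∀ i j, ∃ k : ℕ, B i j = (k : ℝ))
    (hdet : B.det = 1 ∨ B.det = -1) :
    volume (Lambda q) = ENNReal.ofReal (1 / (n.factorial * ∏ i, q i)) ∧
    (∀ A : Set (Fin n → ℝ), MeasurableSet A → A ⊆ posCone n →
      (∀ t : ℝ, 0 < t → (fun v => t • v) '' A = A) →
      volume (B.transpose.mulVec '' A ∩ Lambda q)
        = volume (A ∩ Lambda (B.mulVec q))) ∧
    volume (B.transpose.mulVec '' posCone n ∩ Lambda q)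
      = ENNReal.ofReal (1 / (n.factorial * ∏ i, B.mulVec q i)) := by
  have hB : ∀ i j, 0 ≤ B i j := fun i j => by
    obtain ⟨k, hk⟩ := hint i j
    rw [hk]
    positivity
  have habs : |B.det| = 1 := by rcases hdet with h | h <;> simp [h]
  have hdet0 : B.det ≠ 0 := by rcases hdet with h | h <;> simp [h]
  refine ⟨volume_Lambda hq, fun A _ hA _ => volume_image_inter_Lambda q hB habs hA, ?_⟩
  rw [volume_image_inter_Lambda q hB habs Subset.rfl,
    inter_eq_right.2 fun v hv => hv.1, volume_Lambda (mulVec_mem_posCone hB hdet0 hq)]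
end
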